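/- arXiv:math/9212207 — 6 statements merged into one kernel-verified Lean document; each statement's English description precedes it below -/
import Mathlib

section
/- Let N ≥ 1 and let f : 𝕋^N → ℝ be a continuous function on the N-fold product of the circle group 𝕋 = {z ∈ ℂ : |z| = 1}, and let m be the normalized Haar (probability) measure on 𝕋. Then for every δ > 0 there exist positive integers n₁, n₂, …, n_N with 2n₁ < n₂, 2n₂ < n₃, …, 2n_{N−1} < n_N such that ∫_𝕋 f(z^{n₁}, z^{n₂}, …, z^{n_N}) dm(z) ≤ ∫_{𝕋^N} f(z₁,…,z_N) dm(z₁)⋯dm(z_N) + δ. In particular ∫_{𝕋^N} f dm^N ≥ inf over such lacunary tuples of ∫_𝕋 f(z^{n₁},…,z^{n_N}) dm(z). -/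
open scoped ENNReal NNReal
open MeasureTheory ContinuousLinearMap

noncomputable section

/-- `ψ : S × T → ℂ` is a Schur multiplier of norm at most `C`: for every bounded operator
`A : ℓ²(S) → ℓ²(T)` there is a bounded `B : ℓ²(S) → ℓ²(T)` whose matrix entries are
`ψ(s,t) · A(s,t)` and with `‖B‖ ≤ C‖A‖`. -/
def IsSchurMultiplier {S T : Type*} (ψ : S × T → ℂ) (C : ℝ) : Prop :=
  letI := Classical.decEq S
  letI := Classical.decEq T
  ∀ A : lp (fun _ : S => ℂ) 2 →L[ℂ] lp (fun _ : T => ℂ) 2,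
    ∃ B : lp (fun _ : S => ℂ) 2 →L[ℂ] lp (fun _ : T => ℂ) 2,
      (∀ (s : S) (t : T),
        (inner (𝕜 := ℂ) (lp.single 2 t 1) (B (lp.single 2 s 1)))
          = ψ (s, t) * inner (𝕜 := ℂ) (lp.single 2 t 1) (A (lp.single 2 s 1))) ∧
      ‖B‖ ≤ C * ‖A‖


def chi10 (N : ℕ) : Multiplicative (Fin N → ℤ) →* C(Fin N → Circle, ℂ) where
  toFun a := ⟨fun x => ((∏ i, (x i) ^ (a.toAdd i) : Circle) : ℂ), by fun_prop⟩
  map_one' := by ext x; simp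
  map_mul' a b := by
    ext x
    simp [zpow_add, Finset.prod_mul_distrib]

lemma chi10_apply (N : ℕ) (a : Multiplicative (Fin N → ℤ)) (x : Fin N → Circle) :
    chi10 N a x = ((∏ i, (x i) ^ (a.toAdd i) : Circle) : ℂ) := rfl

lemma coeprod10 {N : ℕ} (g : Fin N → Circle) :
    ((∏ i, g i : Circle) : ℂ) = ∏ i, (g i : ℂ) := map_prod Circle.coeHom g Finset.univ

lemma zpowsum10 {N : ℕ} (z : Circle) (e : Fin N → ℤ) :
    z ^ (∑ i, e i) = ∏ i, z ^ e i := by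
  induction (Finset.univ : Finset (Fin N)) using Finset.induction_on with
  | empty => simp
  | insert i s hi ih => rw [Finset.sum_insert hi, Finset.prod_insert hi, zpow_add, ih]

def sub10 (N : ℕ) : StarSubalgebra ℂ C(Fin N → Circle, ℂ) where
  toSubalgebra := Algebra.adjoin ℂ (MonoidHom.mrange (chi10 N) : Set C(Fin N → Circle, ℂ))
  star_mem' := by
    change Algebra.adjoin ℂ (MonoidHom.mrange (chi10 N) : Set C(Fin N → Circle, ℂ)) ≤
      star (Algebra.adjoin ℂ (MonoidHom.mrange (chi10 N) : Set C(Fin N → Circle, ℂ)))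
    refine Algebra.adjoin_le ?_
    rintro - ⟨a, rfl⟩
    refine Algebra.subset_adjoin ⟨a⁻¹, ?_⟩
    ext x
    simp [chi10_apply, ← Circle.coe_inv_eq_conj]

lemma sub10_coe (N : ℕ) : Subalgebra.toSubmodule (sub10 N).toSubalgebra =
    Submodule.span ℂ (Set.range (chi10 N)) := by
  change Subalgebra.toSubmodule (Algebra.adjoin ℂ
    (MonoidHom.mrange (chi10 N) : Set C(Fin N → Circle, ℂ))) = _
  rw [Algebra.adjoin_eq_span, Submonoid.closure_eq, MonoidHom.coe_mrange]

lemma sub10_top (N : ℕ) : (sub10 N).topologicalClosure = ⊤ := by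
  apply ContinuousMap.starSubalgebra_topologicalClosure_eq_top_of_separatesPoints
  intro x y hxy
  obtain ⟨i, hi⟩ := Function.ne_iff.mp hxy
  refine ⟨_, ⟨chi10 N (Multiplicative.ofAdd (Pi.single i 1)),
    Algebra.subset_adjoin ⟨_, rfl⟩, rfl⟩, ?_⟩
  have key : ∀ x : Fin N → Circle,
      chi10 N (Multiplicative.ofAdd (Pi.single i 1)) x = (x i : ℂ) := by
    intro x
    rw [chi10_apply, Finset.prod_eq_single i]
    · simp
    · intro j _ hj
      simp [Pi.single_eq_of_ne hj]
    · simp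
  change chi10 N (Multiplicative.ofAdd (Pi.single i 1)) x ≠
    chi10 N (Multiplicative.ofAdd (Pi.single i 1)) y
  rw [key, key]
  exact fun h => hi (Circle.ext h)

lemma approx10 (N : ℕ) (F : C(Fin N → Circle, ℂ)) (ε : ℝ) (hε : 0 < ε) :
    ∃ G ∈ Submodule.span ℂ (Set.range (chi10 N)), ∀ x, ‖F x - G x‖ < ε := by
  have h : F ∈ (sub10 N).topologicalClosure := by rw [sub10_top]; trivial
  have h' : F ∈ closure ((sub10 N : StarSubalgebra ℂ C(Fin N → Circle, ℂ)) : Set _) := h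
  obtain ⟨G, hG, hd⟩ := Metric.mem_closure_iff.mp h' ε hε
  refine ⟨G, ?_, fun x => ?_⟩
  · rw [← sub10_coe]; exact hG
  · rw [← dist_eq_norm]
    exact (ContinuousMap.dist_apply_le_dist x).trans_lt hd

section
variable [MeasurableSpace Circle] [BorelSpace Circle]
    (m : Measure Circle) [m.IsHaarMeasure] [IsProbabilityMeasure m]

lemma int10 (e : ℤ) (he : e ≠ 0) : ∫ z : Circle, ((z ^ e : Circle) : ℂ) ∂m = 0 := by
  obtain ⟨w, hw⟩ : ∃ w : Circle, w ^ e ≠ 1 := by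
    refine ⟨Circle.exp (1 / e), ?_⟩
    rw [← Circle.exp_zsmul]
    have he' : (e : ℝ) ≠ 0 := by exact_mod_cast he
    have : e • (1 / (e : ℝ)) = 1 := by rw [zsmul_eq_mul]; field_simp
    rw [this]
    intro h
    have h1 := (Circle.exp_eq_one).mp h
    obtain ⟨n, hn⟩ := h1
    have hpi := Real.pi_gt_three
    have h0 : (n : ℝ) > 0 := by
      by_contra hneg
      push Not at hneg
      nlinarith
    have h0' : 1 ≤ n := by exact_mod_cast h0
    have h2 : (1 : ℝ) ≤ n := by exact_mod_cast h0'
    nlinarith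
  have h := integral_mul_left_eq_self (μ := m) (fun z : Circle => ((z ^ e : Circle) : ℂ)) w
  simp only [mul_zpow, Circle.coe_mul] at h
  rw [integral_const_mul] at h
  have h2 : (((w ^ e : Circle) : ℂ) - 1) * ∫ z : Circle, ((z ^ e : Circle) : ℂ) ∂m = 0 := by
    rw [sub_mul, h]; ring
  rcases mul_eq_zero.mp h2 with h3 | h3
  · exact absurd (Circle.ext (by simpa [sub_eq_zero] using h3)) hw
  · exact h3

lemma cont10 {N : ℕ} (F : C(Fin N → Circle, ℂ)) (n : Fin N → ℕ) :
    Continuous fun z : Circle => F (fun i => z ^ n i) := by fun_prop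

lemma intg10 {N : ℕ} (F : C(Fin N → Circle, ℂ)) (n : Fin N → ℕ) :
    Integrable (fun z : Circle => F (fun i => z ^ n i)) m :=
  (cont10 F n).integrable_of_hasCompactSupport (HasCompactSupport.of_compactSpace _)

lemma intg10' {N : ℕ} (F : C(Fin N → Circle, ℂ)) :
    Integrable F (Measure.pi fun _ : Fin N => m) :=
  F.continuous.integrable_of_hasCompactSupport (HasCompactSupport.of_compactSpace _)

lemma chi10_pi {N : ℕ} (a : Multiplicative (Fin N → ℤ)) (ha : a ≠ 1) :
    ∫ x, chi10 N a x ∂(Measure.pi fun _ : Fin N => m) = 0 := by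
  simp only [chi10_apply, coeprod10]
  rw [integral_fintype_prod_eq_prod (fun i (z : Circle) => ((z ^ (a.toAdd i) : Circle) : ℂ))]
  have : a.toAdd ≠ 0 := ha
  obtain ⟨i, hi⟩ := Function.ne_iff.mp this
  exact Finset.prod_eq_zero (Finset.mem_univ i) (int10 m _ hi)

lemma poly10 {N : ℕ} (a : Fin N → ℤ) (ha : a ≠ 0) :
    ∀ᶠ k : ℕ in Filter.atTop, ∑ i : Fin N, ((k : ℤ) ^ (i : ℕ)) * a i ≠ 0 := by
  let p : Polynomial ℤ := ∑ i : Fin N, Polynomial.monomial (i : ℕ) (a i)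
  have hp : p ≠ 0 := by
    obtain ⟨i, hi⟩ := Function.ne_iff.mp ha
    intro h
    apply hi
    have := congrArg (fun q => Polynomial.coeff q (i : ℕ)) h
    simpa [p, Polynomial.finset_sum_coeff, Polynomial.coeff_monomial, Fin.val_inj] using this
  have hfin : {k : ℕ | p.IsRoot (k : ℤ)}.Finite :=
    (Polynomial.finite_setOf_isRoot hp).preimage (Nat.cast_injective.injOn)
  have := hfin.eventually_cofinite_notMem
  rw [Nat.cofinite_eq_atTop] at this
  filter_upwards [this] with k hk h
  apply hk
  simp only [Set.mem_setOf_eq, Polynomial.IsRoot, p, Polynomial.eval_finset_sum,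
    Polynomial.eval_monomial]
  rw [← h]
  exact Finset.sum_congr rfl fun i _ => mul_comm _ _

lemma span10 {N : ℕ} (G : C(Fin N → Circle, ℂ))
    (hG : G ∈ Submodule.span ℂ (Set.range (chi10 N))) :
    ∀ᶠ k : ℕ in Filter.atTop, ∫ z, G (fun i => z ^ (k ^ (i : ℕ))) ∂m =
      ∫ x, G x ∂(Measure.pi fun _ : Fin N => m) := by
  induction hG using Submodule.span_induction with
  | mem G h =>
    obtain ⟨a, rfl⟩ := h
    by_cases ha : a = 1
    · subst ha; simp
    · filter_upwards [poly10 a.toAdd ha] with k hk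
      rw [chi10_pi m a ha, ← int10 m _ hk]
      refine integral_congr_ae (Filter.Eventually.of_forall fun z => ?_)
      simp only [chi10_apply]
      congr 1
      rw [zpowsum10]
      refine Finset.prod_congr rfl fun i _ => ?_
      rw [zpow_mul]
      norm_cast
  | zero => simp
  | add F G _ _ hF hG =>
    filter_upwards [hF, hG] with k h1 h2
    simp only [ContinuousMap.add_apply]
    rw [integral_add (intg10 m F _) (intg10 m G _), integral_add (intg10' m F) (intg10' m G),
      h1, h2]
  | smul c F _ hF =>
    filter_upwards [hF] with k h1
    simp only [ContinuousMap.smul_apply]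
    rw [integral_smul, integral_smul, h1]

end

/-- for continuous `f : 𝕋^N → ℝ` (with `m` the normalized Haar probability
measure on the circle `𝕋`) and any `δ > 0` there is a lacunary tuple
`n₁ < n₂ < … < n_N` (with `2nᵢ < nᵢ₊₁`) of positive integers such that
`∫ f(z^{n₁},…,z^{n_N}) dm(z) ≤ ∫_{𝕋^N} f dm^N + δ`. -/
theorem stmt_10 [MeasurableSpace Circle] [BorelSpace Circle]
    (m : Measure Circle) [m.IsHaarMeasure] [IsProbabilityMeasure m]
    (N : ℕ) (hN : 1 ≤ N) (f : (Fin N → Circle) → ℝ) (hf : Continuous f)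
    (δ : ℝ) (hδ : 0 < δ) :
    ∃ n : Fin N → ℕ, (∀ i, 0 < n i) ∧
      (∀ (i : Fin N) (h : (i : ℕ) + 1 < N), 2 * n i < n ⟨(i : ℕ) + 1, h⟩) ∧
      (∫ z, f (fun i => z ^ (n i)) ∂m)
        ≤ (∫ x, f x ∂(Measure.pi fun _ : Fin N => m)) + δ := by
  let F : C(Fin N → Circle, ℂ) := ⟨fun x => (f x : ℂ), by fun_prop⟩
  obtain ⟨G, hG, hd⟩ := approx10 N F (δ / 2) (by positivity)
  obtain ⟨k, hk, hk3⟩ := ((span10 m G hG).and (Filter.eventually_ge_atTop 3)).exists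
  refine ⟨fun i => k ^ (i : ℕ), fun i => by positivity, fun i h => ?_, ?_⟩
  · have : 0 < k ^ (i : ℕ) := by positivity
    simp only [pow_succ]
    nlinarith
  · have h1 : ‖∫ z, F (fun i => z ^ (k ^ (i : ℕ))) ∂m - ∫ z, G (fun i => z ^ (k ^ (i : ℕ))) ∂m‖
        ≤ δ / 2 := by
      rw [← integral_sub (intg10 m F _) (intg10 m G _)]
      refine (norm_integral_le_of_norm_le_const (C := δ / 2)
        (Filter.Eventually.of_forall fun z => (hd _).le)).trans ?_
      simp
    have h2 : ‖∫ x, F x ∂(Measure.pi fun _ : Fin N => m) -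
        ∫ x, G x ∂(Measure.pi fun _ : Fin N => m)‖ ≤ δ / 2 := by
      rw [← integral_sub (intg10' m F) (intg10' m G)]
      refine (norm_integral_le_of_norm_le_const (C := δ / 2)
        (Filter.Eventually.of_forall fun z => (hd _).le)).trans ?_
      simp
    rw [hk] at h1
    have e1 : ∫ z, F (fun i => z ^ (k ^ (i : ℕ))) ∂m =
      ((∫ z, f (fun i => z ^ (k ^ (i : ℕ))) ∂m : ℝ) : ℂ) := integral_ofReal
    have e2 : ∫ x, F x ∂(Measure.pi fun _ : Fin N => m) =
      ((∫ x, f x ∂(Measure.pi fun _ : Fin N => m) : ℝ) : ℂ) := integral_ofReal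
    rw [e1] at h1
    rw [e2] at h2
    have h1' := (le_abs_self _).trans ((Complex.abs_re_le_norm _).trans h1)
    have h2' := (neg_le_abs _).trans ((Complex.abs_re_le_norm _).trans h2)
    simp only [Complex.sub_re, Complex.ofReal_re] at h1' h2'
    linarith
end
end

section
/- Let S and T be finite nonempty sets and let H be a complex Hilbert space. Let B : (S → H) × (T → ℂ) → ℂ be a bilinear form such that for every n ≥ 1 and all families φ₁,…,φ_n : S → H and η₁,…,η_n : T → ℂ one has |Σ_{k=1}^n B(φ_k, η_k)| ≤ sup_{s∈S} (Σ_{k=1}^n ‖φ_k(s)‖²)^{1/2} · sup_{t∈T} (Σ_{k=1}^n |η_k(t)|²)^{1/2}. Then there exist weights P : S → [0,∞) and Q : T → [0,∞) with Σ_{s∈S} P(s) = 1 and Σ_{t∈T} Q(t) = 1 such that for every φ : S → H and η : T → ℂ, |B(φ, η)| ≤ (Σ_{s∈S} P(s) ‖φ(s)‖²)^{1/2} · (Σ_{t∈T} Q(t) |η(t)|²)^{1/2}. -/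
open scoped ENNReal NNReal
open MeasureTheory ContinuousLinearMap

noncomputable section

/-- a Grothendieck–Pietsch style separation lemma: if a bilinear form
`B : (S → H) × (T → ℂ) → ℂ` satisfies
`|Σ_k B(φ_k, η_k)| ≤ sup_s (Σ_k ‖φ_k(s)‖²)^{1/2} · sup_t (Σ_k |η_k(t)|²)^{1/2}`
for all finite families, then there are probability weights `P` on `S` and `Q` on `T`
with `|B(φ,η)| ≤ (Σ_s P(s)‖φ(s)‖²)^{1/2} (Σ_t Q(t)|η(t)|²)^{1/2}`. -/
theorem stmt_11 {S T : Type*} [Fintype S] [Fintype T] [Nonempty S] [Nonempty T]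
    (H : Type*) [NormedAddCommGroup H] [InnerProductSpace ℂ H]
    (B : (S → H) →ₗ[ℂ] (T → ℂ) →ₗ[ℂ] ℂ)
    (hB : ∀ (n : ℕ) (φ : Fin n → S → H) (η : Fin n → T → ℂ),
      ‖∑ k, B (φ k) (η k)‖ ≤
        (⨆ s : S, Real.sqrt (∑ k, ‖φ k s‖ ^ 2)) *
        (⨆ t : T, Real.sqrt (∑ k, ‖η k t‖ ^ 2))) :
    ∃ (P : S → ℝ) (Q : T → ℝ), (∀ s, 0 ≤ P s) ∧ (∀ t, 0 ≤ Q t) ∧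
      (∑ s, P s) = 1 ∧ (∑ t, Q t) = 1 ∧
      ∀ (φ : S → H) (η : T → ℂ),
        ‖B φ η‖ ≤ Real.sqrt (∑ s, P s * ‖φ s‖ ^ 2) *
          Real.sqrt (∑ t, Q t * ‖η t‖ ^ 2) := by
  classical
  let F : (n : ℕ) → (Fin n → S → H) → (Fin n → T → ℂ) → S × T → ℝ := fun n φ η p =>
    ∑ k, ‖φ k p.1‖ ^ 2 + ∑ k, ‖η k p.2‖ ^ 2 - 2 * (∑ k, B (φ k) (η k)).re
  let C : Set (S × T → ℝ) := {x | ∃ n φ η, x = F n φ η}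
  let N : Set (S × T → ℝ) := {x | ∀ i, x i < 0}
  have hadd : ∀ x ∈ C, ∀ y ∈ C, x + y ∈ C := by
    rintro _ ⟨n, φ, η, rfl⟩ _ ⟨m, φ', η', rfl⟩
    refine ⟨n + m, Fin.append φ φ', Fin.append η η', ?_⟩
    funext p
    simp only [F, Pi.add_apply, Fin.sum_univ_add, Fin.append_left, Fin.append_right,
      Complex.add_re]
    ring
  have hsmul : ∀ a : ℝ, 0 ≤ a → ∀ x ∈ C, a • x ∈ C := by
    rintro a ha _ ⟨n, φ, η, rfl⟩
    refine ⟨n, fun k => (Real.sqrt a : ℂ) • φ k, fun k => (Real.sqrt a : ℂ) • η k, ?_⟩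
    funext p
    have h1 : ((Real.sqrt a : ℂ)) * (Real.sqrt a : ℂ) = (a : ℂ) := by
      rw [← Complex.ofReal_mul, Real.mul_self_sqrt ha]
    have h2 : |Real.sqrt a| ^ 2 = a := by rw [sq_abs, Real.sq_sqrt ha]
    simp only [F, Pi.smul_apply, norm_smul, map_smul, LinearMap.smul_apply, smul_eq_mul,
      Complex.norm_real, Real.norm_eq_abs, mul_pow, h2, ← Finset.mul_sum, ← mul_assoc, h1,
      Complex.re_ofReal_mul, norm_mul]
    ring
  have hCc : Convex ℝ C := fun x hx y hy a b ha hb _ =>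
    hadd _ (hsmul a ha x hx) _ (hsmul b hb y hy)
  have hNc : Convex ℝ N := by
    have : N = Set.univ.pi (fun _ => Set.Iio (0 : ℝ)) := by ext; simp [N]
    rw [this]
    exact convex_pi (fun i _ => convex_Iio 0)
  have hNo : IsOpen N := by
    have : N = Set.univ.pi (fun _ => Set.Iio (0 : ℝ)) := by ext; simp [N]
    rw [this]
    exact isOpen_set_pi Set.finite_univ (fun i _ => isOpen_Iio)
  have hdisj : Disjoint N C := by
    rw [Set.disjoint_left]
    rintro _ hN ⟨n, φ, η, rfl⟩
    obtain ⟨s, hs⟩ := exists_eq_ciSup_of_finite (f := fun s : S => Real.sqrt (∑ k, ‖φ k s‖ ^ 2))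
    obtain ⟨t, ht⟩ := exists_eq_ciSup_of_finite (f := fun t : T => Real.sqrt (∑ k, ‖η k t‖ ^ 2))
    have h := hB n φ η
    rw [← hs, ← ht] at h
    have h3 := hN (s, t)
    simp only [F] at h3
    have h1 := Real.sq_sqrt (Finset.sum_nonneg (s := Finset.univ)
      (fun k _ => sq_nonneg ‖φ k s‖))
    have h2 := Real.sq_sqrt (Finset.sum_nonneg (s := Finset.univ)
      (fun k _ => sq_nonneg ‖η k t‖))
    have h4 := Complex.re_le_norm (∑ k, B (φ k) (η k))
    nlinarith [sq_nonneg (Real.sqrt (∑ k, ‖φ k s‖ ^ 2) - Real.sqrt (∑ k, ‖η k t‖ ^ 2))]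
  obtain ⟨f, u, hfN, hfC⟩ := geometric_hahn_banach_open hNc hNo hCc hdisj
  have h0 : (0 : S × T → ℝ) ∈ C := ⟨0, Fin.elim0, Fin.elim0, by funext p; simp [F]⟩
  have hu : u ≤ 0 := by simpa using hfC 0 h0
  have hW : 0 < f 1 := by
    have := hfN (-1) (fun i => by simp)
    rw [map_neg] at this
    linarith
  have hC0 : ∀ x ∈ C, 0 ≤ f x := by
    intro x hx
    by_contra! hlt
    have h1 := hfN ((f x / f 1) • 1) (fun i => by
      simpa using div_neg_of_neg_of_pos hlt hW)
    rw [map_smul, smul_eq_mul, div_mul_cancel₀ _ hW.ne'] at h1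
    linarith [hfC x hx]
  let w : S × T → ℝ := fun i => f (Pi.single i 1)
  have hw : ∀ i, 0 ≤ w i := by
    intro i
    by_contra! hlt
    have h1 := hfN ((w i / f 1) • 1 - Pi.single i 1) (fun j => by
      have h2 := div_neg_of_neg_of_pos hlt hW
      have h3 : (0 : ℝ) ≤ (Pi.single i 1 : S × T → ℝ) j := by
        rw [Pi.single_apply]; split_ifs <;> norm_num
      simp only [Pi.sub_apply, Pi.smul_apply, Pi.one_apply, smul_eq_mul]
      linarith)
    rw [map_sub, map_smul, smul_eq_mul, div_mul_cancel₀ _ hW.ne'] at h1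
    simp only [w] at h1
    linarith
  have hf : ∀ x, f x = ∑ s, ∑ t, w (s, t) * x (s, t) := by
    intro x
    rw [← Fintype.sum_prod_type' (f := fun s t => w (s, t) * x (s, t))]
    conv_lhs => rw [pi_eq_sum_univ' x]
    rw [map_sum]
    refine Finset.sum_congr rfl fun i _ => ?_
    rw [map_smul, smul_eq_mul, mul_comm]
  have hf1 : f 1 = ∑ s, ∑ t, w (s, t) := by simpa using hf 1
  refine ⟨fun s => (∑ t, w (s, t)) / f 1, fun t => (∑ s, w (s, t)) / f 1,
    fun s => div_nonneg (Finset.sum_nonneg fun _ _ => hw _) hW.le,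
    fun t => div_nonneg (Finset.sum_nonneg fun _ _ => hw _) hW.le, ?_, ?_, ?_⟩
  · rw [← Finset.sum_div, ← hf1, div_self hW.ne']
  · rw [← Finset.sum_div, Finset.sum_comm, ← hf1, div_self hW.ne']
  intro φ η
  set p := ∑ s, (∑ t, w (s, t)) / f 1 * ‖φ s‖ ^ 2 with hp
  set q := ∑ t, (∑ s, w (s, t)) / f 1 * ‖η t‖ ^ 2 with hq
  have hp0 : 0 ≤ p := Finset.sum_nonneg fun s _ => mul_nonneg
    (div_nonneg (Finset.sum_nonneg fun _ _ => hw _) hW.le) (sq_nonneg _)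
  have hp' : f 1 * p = ∑ s, ∑ t, w (s, t) * ‖φ s‖ ^ 2 := by
    rw [hp, Finset.mul_sum]
    refine Finset.sum_congr rfl fun s _ => ?_
    rw [← Finset.sum_mul]
    field_simp
  have hq' : f 1 * q = ∑ s, ∑ t, w (s, t) * ‖η t‖ ^ 2 := by
    rw [Finset.sum_comm, hq, Finset.mul_sum]
    refine Finset.sum_congr rfl fun s _ => ?_
    rw [← Finset.sum_mul]
    field_simp
  obtain ⟨c, hc, hcB⟩ : ∃ c : ℂ, ‖c‖ = 1 ∧ c * B φ η = (‖B φ η‖ : ℂ) := by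
    obtain ⟨c, hc, h⟩ := RCLike.exists_norm_eq_mul_self (B φ η)
    exact ⟨c, hc, h.symm⟩
  have key : ∀ x : ℝ, 0 ≤ p * (x * x) + (-2 * ‖B φ η‖) * x + q := by
    intro x
    have h := hC0 _ ⟨1, fun _ => ((x : ℂ) * c) • φ, fun _ => η, rfl⟩
    rw [hf] at h
    have h2 : ((x : ℂ) * c * B φ η).re = x * ‖B φ η‖ := by
      rw [mul_assoc, hcB, ← Complex.ofReal_mul, Complex.ofReal_re]
    have h1 : ∑ s, ∑ t, w (s, t) * F 1 (fun _ => ((x : ℂ) * c) • φ) (fun _ => η) (s, t)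
        = f 1 * (p * (x * x) + (-2 * ‖B φ η‖) * x + q) := by
      have : f 1 * (p * (x * x) + (-2 * ‖B φ η‖) * x + q)
        = (f 1 * p) * (x * x) + f 1 * ((-2 * ‖B φ η‖) * x) + f 1 * q := by ring
      rw [this, hp', hq', hf1]
      simp only [Finset.sum_mul, ← Finset.sum_add_distrib]
      refine Finset.sum_congr rfl fun s _ => Finset.sum_congr rfl fun t _ => ?_
      simp only [F, Finset.univ_unique, Finset.sum_singleton, Pi.smul_apply, map_smul,
        LinearMap.smul_apply, smul_eq_mul, h2, norm_smul, norm_mul, hc, Complex.norm_real,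
        Real.norm_eq_abs, mul_one, mul_pow, sq_abs]
      ring
    rw [h1] at h
    exact nonneg_of_mul_nonneg_right h hW
  have hd := discrim_le_zero key
  rw [discrim] at hd
  rw [← Real.sqrt_mul hp0]
  apply Real.le_sqrt_of_sq_le
  nlinarith
end
end

section
/- Let N ≥ 1 and m ≥ 1, let M = M_N(ℂ) be the N × N complex matrices with the operator norm (acting on ℓ²-norm on ℂ^N), and let M* be its dual Banach space. Let a₁,…,a_m ∈ M and ξ₁,…,ξ_m ∈ M*. Let μ be the product over Fin m of the normalized Haar probability measure on the circle 𝕋 = {z ∈ ℂ : |z|=1}. Then |Σ_{j=1}^m ξ_j(a_j)| ≤ ( ∫_{𝕋^m} ‖Σ_{j=1}^m z_j ξ_j‖_{M*} dμ(z) ) · ( ‖Σ_{j=1}^m a_j* a_j‖^{1/2} + ‖Σ_{j=1}^m a_j a_j*‖^{1/2} ). -/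
open scoped ENNReal NNReal
open MeasureTheory ContinuousLinearMap

noncomputable section

theorem aux_F {A : Type*} [CStarAlgebra A] [PartialOrder A] [StarOrderedRing A] (y v : A) (t : ℝ)
    (ht : 0 < t) (hv : v * (1 + t • (star y * y)) = 1) (hv' : (1 + t • (star y * y)) * v = 1) :
    ‖y * v‖ ≤ 1 / (2 * √t) ∧
    star (y - y * v) * (y - y * v) ≤ (t/4) • (star y * y * (star y * y)) ∧
    (y - y * v) * star (y - y * v) ≤ (t/4) • (y * star y * (y * star y)) := by
  have hsv : star v = v := by
    have h1 : (1 + t • (star y * y)) * star v = 1 := by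
      have := congrArg star hv
      simpa using this
    calc star v = v * (1 + t • (star y * y)) * star v := by rw [hv, one_mul]
      _ = v := by rw [mul_assoc, h1, mul_one]
  set h := star y * y with hh
  have hsh : star h = h := by simp [hh]
  have key : v * h * v ≤ (1/(4*t)) • (1:A) := by
    have h0 : 0 ≤ star ((1 - t • h) * v) * ((1 - t • h) * v) := star_mul_self_nonneg _
    have e : (1/(4*t)) • (1:A) - v * h * v
        = (1/(4*t)) • (star ((1 - t • h) * v) * ((1 - t • h) * v)) := by
      have e1 : (1:A) = v * (1 + t • h) * ((1 + t • h) * v) := by rw [hv, hv', mul_one]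
      nth_rewrite 1 [e1]
      simp only [star_mul, star_sub, star_one, star_smul, hsv, hsh, star_trivial]
      simp only [mul_add, add_mul, mul_sub, sub_mul, mul_one, one_mul, smul_mul_assoc,
        mul_smul_comm, smul_add, smul_sub, smul_smul, mul_assoc]
      match_scalars <;> field_simp <;> norm_num
    rw [← sub_nonneg, e]
    exact smul_nonneg (by positivity) h0
  have hvh : y - y * v = t • (y * h * v) := by
    have : y = y * ((1 + t • h) * v) := by rw [hv', mul_one]
    nth_rewrite 1 [this]
    simp only [mul_add, add_mul, mul_one, one_mul, smul_mul_assoc, mul_smul_comm, mul_assoc]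
    abel
  have comm : h * v = v * h := by
    have c1 : h * (1 + t • h) = (1 + t • h) * h := by
      simp [mul_add, add_mul]
    calc h * v = v * (1 + t • h) * h * v := by rw [hv, one_mul]
      _ = v * (h * (1 + t • h)) * v := by rw [c1]; simp only [mul_assoc]
      _ = v * h * ((1 + t • h) * v) := by simp only [mul_assoc]
      _ = v * h := by rw [hv', mul_one]
  have hF : ‖y * v‖ ≤ 1 / (2 * √t) := by
    have h2 : ‖star (y * v) * (y * v)‖ ≤ 1/(4*t) := by
      rw [CStarAlgebra.norm_le_iff_le_algebraMap _ (by positivity) (star_mul_self_nonneg _),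
        Algebra.algebraMap_eq_smul_one]
      refine le_trans (le_of_eq ?_) key
      simp only [star_mul, hsv, hh, mul_assoc]
    rw [CStarRing.norm_star_mul_self] at h2
    refine (sq_le_sq₀ (norm_nonneg _) (by positivity)).mp ?_
    rw [div_pow, mul_pow, Real.sq_sqrt ht.le, pow_two]
    norm_num at h2 ⊢
    exact h2
  refine ⟨hF, ?_, ?_⟩
  · rw [hvh]
    have e : star (t • (y * h * v)) * (t • (y * h * v)) = (t*t) • (star h * (v * h * v) * h) := by
      simp only [star_smul, star_mul, hsv, hsh, star_trivial, smul_mul_assoc, mul_smul_comm, smul_smul]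
      congr 1
      calc v * (h * star y) * (y * h * v) = v * h * h * (h * v) := by simp only [hh, mul_assoc]
        _ = (h * v) * h * (v * h) := by rw [comm]
        _ = _ := by simp only [mul_assoc]
    rw [e]
    have := star_left_conjugate_le_conjugate key h
    calc _ ≤ (t*t) • (star h * ((1/(4*t)) • (1:A)) * h) := by gcongr
      _ = _ := by
        simp only [hsh, mul_smul_comm, smul_mul_assoc, smul_smul, mul_one]
        congr 1; field_simp
  · rw [hvh]
    have key2 : (y * v) * star (y * v) ≤ (1/(4*t)) • (1:A) := by
      refine CStarAlgebra.mul_star_le_algebraMap_norm_sq.trans ?_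
      rw [Algebra.algebraMap_eq_smul_one]
      have : ‖y * v‖^2 ≤ 1/(4*t) := by
        calc _ ≤ (1 / (2 * √t))^2 := by gcongr
          _ = _ := by rw [div_pow, mul_pow, Real.sq_sqrt ht.le]; norm_num
      gcongr
    have e : (t • (y * h * v)) * star (t • (y * h * v))
        = (t*t) • (star (y * star y) * ((y * v) * star (y * v)) * (y * star y)) := by
      simp only [star_smul, star_mul, hsv, hsh, star_star, star_trivial, smul_mul_assoc, mul_smul_comm, smul_smul]
      congr 1
      calc y * h * v * (v * (h * star y)) = (y * h) * v * v * (h * star y) := by simp only [mul_assoc]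
        _ = _ := by simp only [hh, mul_assoc]
    rw [e]
    have := star_left_conjugate_le_conjugate key2 (y * star y)
    calc _ ≤ (t*t) • (star (y * star y) * ((1/(4*t)) • (1:A)) * (y * star y)) := by gcongr
      _ = _ := by
        simp only [star_mul, star_star, mul_smul_comm, smul_mul_assoc, smul_smul, mul_one]
        congr 1; field_simp

theorem aux_bessel {A X : Type*} [CStarAlgebra A] [PartialOrder A] [StarOrderedRing A]
    [TopologicalSpace X] [CompactSpace X] [SecondCountableTopology X]
    [MeasurableSpace X] [OpensMeasurableSpace X] (μ : Measure X) [IsFiniteMeasure μ] {m : ℕ}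
    (e : Fin m → X → ℂ) (he : ∀ i, Continuous (e i))
    (horth : ∀ i j, ∫ x, star (e i x) * e j x ∂μ = if i = j then 1 else 0)
    (Z : X → A) (hZ : Continuous Z) :
    ∑ j, star (∫ x, star (e j x) • Z x ∂μ) * (∫ x, star (e j x) • Z x ∂μ) ≤
      ∫ x, star (Z x) * Z x ∂μ := by
  have hint : ∀ {E : Type _} [NormedAddCommGroup E] {f : X → E}, Continuous f → Integrable f μ :=
    fun {E} _ {f} hf => hf.integrable_of_hasCompactSupport (HasCompactSupport.of_compactSpace f)
  set b : Fin m → A := fun j => ∫ x, star (e j x) • Z x ∂μ with hb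
  have h0 : 0 ≤ ∫ x, star (Z x - ∑ j, e j x • b j) * (Z x - ∑ j, e j x • b j) ∂μ :=
    integral_nonneg fun x => star_mul_self_nonneg _
  have hc1 : Continuous fun x => star (Z x) * Z x := by fun_prop
  have hc2 : ∀ j, Continuous fun x => e j x • (star (Z x) * b j) := fun j => by fun_prop
  have hc3 : ∀ j, Continuous fun x => star (b j) * (star (e j x) • Z x) := fun j => by fun_prop
  have hc4 : ∀ i j, Continuous fun x => (star (e i x) * e j x) • (star (b i) * b j) :=
    fun i j => by fun_prop
  have hexp : ∀ x, star (Z x - ∑ j, e j x • b j) * (Z x - ∑ j, e j x • b j) =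
      star (Z x) * Z x - ∑ j, e j x • (star (Z x) * b j) - ∑ j, star (b j) * (star (e j x) • Z x)
       + ∑ i, ∑ j, (star (e i x) * e j x) • (star (b i) * b j) := by
    intro x
    have h2 : star (∑ j, e j x • b j) * (∑ j, e j x • b j) =
      ∑ i, ∑ j, (star (e i x) * e j x) • (star (b i) * b j) := by
      simp only [star_sum, star_smul, Finset.sum_mul_sum, smul_mul_smul_comm]
    have h3 : star (Z x) * (∑ j, e j x • b j) = ∑ j, e j x • (star (Z x) * b j) := by
      simp only [Finset.mul_sum, mul_smul_comm]
    have h4 : star (∑ j, e j x • b j) * Z x = ∑ j, star (b j) * (star (e j x) • Z x) := by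
      simp only [star_sum, star_smul, Finset.sum_mul, smul_mul_assoc, mul_smul_comm]
    rw [← h2, ← h3, ← h4]
    simp only [star_sub, sub_mul, mul_sub]
    abel
  simp only [hexp] at h0
  have i2 : ∀ j, ∫ x, e j x • (star (Z x) * b j) ∂μ = star (b j) * b j := by
    intro j
    have : ∀ x, e j x • (star (Z x) * b j) = star (star (e j x) • Z x) * b j := by
      intro x; simp
    simp only [this]
    rw [integral_mul_const_of_integrable (hint (by fun_prop))]
    congr 1
    exact ((starL' ℝ (A := A)).integral_comp_comm (fun x => star (e j x) • Z x))
  have i3 : ∀ j, ∫ x, star (b j) * (star (e j x) • Z x) ∂μ = star (b j) * b j := by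
    intro j
    rw [integral_const_mul_of_integrable (hint (by fun_prop))]
  have i4 : ∀ i j, ∫ x, (star (e i x) * e j x) • (star (b i) * b j) ∂μ =
      if i = j then star (b i) * b j else 0 := by
    intro i j
    rw [integral_smul_const, horth]; split_ifs <;> simp
  rw [integral_add, integral_sub, integral_sub, integral_finsetSum, integral_finsetSum, integral_finsetSum] at h0
  rotate_left
  · exact fun i _ => hint (by fun_prop)
  · exact fun i _ => hint (by fun_prop)
  · exact fun i _ => hint (by fun_prop)
  · exact hint (by fun_prop)
  · exact hint (by fun_prop)
  · exact hint (by fun_prop)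
  · exact hint (by fun_prop)
  · exact hint (by fun_prop)
  · exact hint (by fun_prop)
  have i4' : ∀ i, ∫ x, ∑ j, (star (e i x) * e j x) • (star (b i) * b j) ∂μ = star (b i) * b i := by
    intro i
    rw [integral_finsetSum _ (fun j _ => hint (hc4 i j))]
    simp only [i4, Finset.sum_ite_eq, Finset.mem_univ, if_true]
  simp only [i2, i3, i4'] at h0
  rw [sub_add_cancel] at h0
  exact sub_nonneg.mp h0

theorem aux_fourth {A X : Type*} [CStarAlgebra A] [PartialOrder A] [StarOrderedRing A]
    [TopologicalSpace X] [CompactSpace X] [SecondCountableTopology X]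
    [MeasurableSpace X] [OpensMeasurableSpace X] (μ : Measure X) [IsFiniteMeasure μ] {m : ℕ}
    (e : Fin m → X → ℂ) (he : ∀ i, Continuous (e i))
    (h4 : ∀ i j k l, ∫ x, star (e i x) * e j x * (star (e k x) * e l x) ∂μ =
      (if i = j ∧ k = l then 1 else 0) + (if i = l ∧ j = k then 1 else 0)
        - (if i = j ∧ j = k ∧ k = l then 1 else 0))
    (a : Fin m → A) (p q : ℝ)
    (ha : ‖∑ j, star (a j) * a j‖ ≤ p) (hb : ‖∑ j, a j * star (a j)‖ ≤ q) :
    ∫ x, star (∑ j, e j x • a j) * (∑ j, e j x • a j) * (star (∑ j, e j x • a j) * (∑ j, e j x • a j)) ∂μ ≤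
      (p * (p + q)) • (1 : A) := by
  have hp : 0 ≤ p := (norm_nonneg _).trans ha
  have hq : 0 ≤ q := (norm_nonneg _).trans hb
  have hint : ∀ {E : Type _} [NormedAddCommGroup E] {f : X → E}, Continuous f → Integrable f μ :=
    fun {E} _ {f} hf => hf.integrable_of_hasCompactSupport (HasCompactSupport.of_compactSpace f)
  have hexp : ∀ x, star (∑ j, e j x • a j) * (∑ j, e j x • a j) * (star (∑ j, e j x • a j) * (∑ j, e j x • a j))
     = ∑ i, ∑ j, ∑ k, ∑ l, (star (e i x) * e j x * (star (e k x) * e l x)) • (star (a i) * a j * (star (a k) * a l)) := by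
    intro x
    have h2 : star (∑ j, e j x • a j) * (∑ j, e j x • a j) =
      ∑ i, ∑ j, (star (e i x) * e j x) • (star (a i) * a j) := by
      simp only [star_sum, star_smul, Finset.sum_mul_sum, smul_mul_smul_comm]
    rw [h2]
    rw [Finset.sum_mul]
    refine Finset.sum_congr rfl fun i _ => ?_
    rw [Finset.sum_mul]
    refine Finset.sum_congr rfl fun j _ => ?_
    rw [Finset.mul_sum]
    refine Finset.sum_congr rfl fun k _ => ?_
    rw [Finset.mul_sum]
    simp only [smul_mul_smul_comm]
  simp only [hexp]
  have e1 : ∫ x, ∑ i, ∑ j, ∑ k, ∑ l, (star (e i x) * e j x * (star (e k x) * e l x)) • (star (a i) * a j * (star (a k) * a l)) ∂μ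
    = ∑ i, ∑ j, ∑ k, ∑ l, ((if i = j ∧ k = l then 1 else 0) + (if i = l ∧ j = k then 1 else 0)
        - (if i = j ∧ j = k ∧ k = l then 1 else 0) : ℂ) • (star (a i) * a j * (star (a k) * a l)) := by
    rw [integral_finsetSum _ (fun i _ => hint (by fun_prop))]
    refine Finset.sum_congr rfl fun i _ => ?_
    rw [integral_finsetSum _ (fun i _ => hint (by fun_prop))]
    refine Finset.sum_congr rfl fun j _ => ?_
    rw [integral_finsetSum _ (fun i _ => hint (by fun_prop))]
    refine Finset.sum_congr rfl fun k _ => ?_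
    rw [integral_finsetSum _ (fun i _ => hint (by fun_prop))]
    refine Finset.sum_congr rfl fun l _ => ?_
    rw [integral_smul_const, h4]
  rw [e1]
  have e2 : ∑ i, ∑ j, ∑ k, ∑ l, ((if i = j ∧ k = l then 1 else 0) + (if i = l ∧ j = k then 1 else 0)
        - (if i = j ∧ j = k ∧ k = l then 1 else 0) : ℂ) • (star (a i) * a j * (star (a k) * a l))
    = star (∑ j, star (a j) * a j) * (∑ j, star (a j) * a j)
      + ∑ i, star (a i) * (∑ j, a j * star (a j)) * a i
      - ∑ i, star (star (a i) * a i) * (star (a i) * a i) := by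
    simp only [add_smul, sub_smul, Finset.sum_add_distrib, Finset.sum_sub_distrib, ite_smul, one_smul,
      zero_smul, ite_and, Finset.sum_ite_eq, Finset.sum_ite_irrel, Finset.sum_const_zero, Finset.mem_univ, if_true,
      Finset.sum_ite_eq']
    simp only [star_sum, star_mul, star_star, Finset.sum_mul, Finset.mul_sum, mul_assoc]
    congr 2
    rw [Finset.sum_comm]
  rw [e2]
  have t1 : star (∑ j, star (a j) * a j) * (∑ j, star (a j) * a j) ≤ (p * p) • (1:A) := by
    refine CStarAlgebra.star_mul_le_algebraMap_norm_sq.trans ?_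
    rw [Algebra.algebraMap_eq_smul_one, pow_two]
    gcongr
  have t2 : ∑ i, star (a i) * (∑ j, a j * star (a j)) * a i ≤ (p * q) • (1:A) := by
    have hsa : IsSelfAdjoint (∑ j, a j * star (a j)) := by
      simp [IsSelfAdjoint, star_sum]
    have hsa' : IsSelfAdjoint (∑ j, star (a j) * a j) := by
      simp [IsSelfAdjoint, star_sum]
    calc _ ≤ ∑ i, ‖∑ j, a j * star (a j)‖ • (star (a i) * a i) :=
          Finset.sum_le_sum fun i _ => CStarAlgebra.star_left_conjugate_le_norm_smul hsa
      _ = ‖∑ j, a j * star (a j)‖ • ∑ i, (star (a i) * a i) := by rw [Finset.smul_sum]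
      _ ≤ ‖∑ j, a j * star (a j)‖ • (‖∑ i, (star (a i) * a i)‖ • (1:A)) := by
          gcongr
          rw [← Algebra.algebraMap_eq_smul_one]
          exact hsa'.le_algebraMap_norm_self
      _ = (‖∑ i, (star (a i) * a i)‖ * ‖∑ j, a j * star (a j)‖) • (1:A) := by
          rw [smul_smul, mul_comm]
      _ ≤ _ := by
          gcongr
  have t3 : 0 ≤ ∑ i, star (star (a i) * a i) * (star (a i) * a i) :=
    Finset.sum_nonneg fun i _ => star_mul_self_nonneg _
  calc _ ≤ (p * p) • (1:A) + (p * q) • (1:A) - 0 := by gcongr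
    _ = _ := by rw [sub_zero, ← add_smul, mul_add]

theorem aux_moment [MeasurableSpace Circle] [BorelSpace Circle]
    (m₀ : Measure Circle) [m₀.IsHaarMeasure] [IsProbabilityMeasure m₀] (m : ℕ) (i j k l : Fin m) :
    ∫ z : Fin m → Circle, star (z i : ℂ) * z j * (star (z k : ℂ) * z l) ∂(Measure.pi fun _ : Fin m => m₀) =
      (if i = j ∧ k = l then 1 else 0) + (if i = l ∧ j = k then 1 else 0)
        - (if i = j ∧ j = k ∧ k = l then 1 else 0) := by
  have hz : ∀ w : Circle, star (w : ℂ) * w = 1 := fun w => by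
    rw [mul_comm]; simp [Complex.mul_conj]
  have one : ∫ z : Fin m → Circle, (1:ℂ) ∂(Measure.pi fun _ : Fin m => m₀) = 1 := by simp
  by_cases h1 : i = j ∧ k = l
  · obtain ⟨rfl, rfl⟩ := h1
    simp only [hz, mul_one, one]
    by_cases h : i = k <;> simp [h]
  by_cases h2 : i = l ∧ j = k
  · obtain ⟨rfl, rfl⟩ := h2
    have : ∀ z : Fin m → Circle, star (z i : ℂ) * z j * (star (z j : ℂ) * z i) = 1 := fun z => by
      have h1 := hz (z i)
      have h2 := hz (z j)
      linear_combination (star (z j : ℂ) * z j) * h1 + h2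
    simp only [this, one]
    have : ¬ (i = j) := fun h => h1 ⟨h, h.symm⟩
    simp [this]
  have h3 : ¬ (i = j ∧ j = k ∧ k = l) := fun h => h1 ⟨h.1, h.2.2⟩
  simp only [h1, h2, h3, if_false, add_zero, sub_zero]
  set f : (Fin m → Circle) → ℂ := fun z => star (z i : ℂ) * z j * (star (z k : ℂ) * z l) with hf
  have hmul : ∀ w z, f (w * z) = f w * f z := fun w z => by
    simp only [hf, Pi.mul_apply, Circle.coe_mul, star_mul]; ring
  have key : ∀ w, ∫ z, f z ∂(Measure.pi fun _ : Fin m => m₀)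
      = f w * ∫ z, f z ∂(Measure.pi fun _ : Fin m => m₀) := fun w => by
    rw [← integral_const_mul]
    simp only [← hmul]
    exact (integral_mul_left_eq_self f w).symm
  by_contra hne
  have hw : ∀ w, f w = 1 := fun w => by
    have := key w
    have h5 : (1 - f w) * ∫ z, f z ∂(Measure.pi fun _ : Fin m => m₀) = 0 := by linear_combination this
    rcases mul_eq_zero.mp h5 with h | h
    · linear_combination -h
    · exact absurd h hne
  let I' : Circle := ⟨Complex.I, by simp [Submonoid.unitSphere]⟩
  have hI' : (I' : ℂ) = Complex.I := rfl
  have hst : star (I' : ℂ) = -Complex.I := by rw [hI']; simp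
  have c1 : -Complex.I ≠ 1 := by simp [Complex.ext_iff]
  have c2 : -Complex.I * -Complex.I ≠ 1 := by simp [Complex.ext_iff]; norm_num
  have s1 : ∀ r : Fin m, ((Pi.mulSingle r I' : Fin m → Circle) r : ℂ) = Complex.I := fun r => by
    rw [Pi.mulSingle_eq_same, hI']
  have s2 : ∀ r s : Fin m, s ≠ r → ((Pi.mulSingle r I' : Fin m → Circle) s : ℂ) = 1 := fun r s h => by
    rw [Pi.mulSingle_eq_of_ne h, Circle.coe_one]
  have c3 : star Complex.I = -Complex.I := hst
  have c4 : Complex.I * Complex.I = -1 := Complex.I_mul_I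
  by_cases hij : i = j
  · have hkl : l ≠ k := fun h => h1 ⟨hij, h.symm⟩
    subst hij
    have hk := hw (Pi.mulSingle k I')
    simp only [hf] at hk
    rw [s1, s2 k l hkl, hz, c3] at hk
    exact c1 (by simpa using hk)
  by_cases hil : i = l
  · have hjk : j ≠ k := fun h => h2 ⟨hil, h⟩
    subst hil
    have hj := hw (Pi.mulSingle k I')
    simp only [hf] at hj
    rw [s1, s2 k j hjk, c3] at hj
    by_cases hik : i = k
    · subst hik
      rw [s1, c3] at hj
      apply c1
      linear_combination hj - Complex.I * c4
    · rw [s2 k i hik] at hj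
      exact c1 (by simpa using hj)
  have hi := hw (Pi.mulSingle i I')
  simp only [hf] at hi
  rw [s1, s2 i j (Ne.symm hij), s2 i l (Ne.symm hil), c3] at hi
  by_cases hik : k = i
  · subst hik
    rw [s1, c3] at hi
    exact c2 (by simpa using hi)
  · rw [s2 i k hik] at hi
    exact c1 (by simpa using hi)

theorem aux_step [MeasurableSpace Circle] [BorelSpace Circle]
    (m₀ : Measure Circle) [m₀.IsHaarMeasure] [IsProbabilityMeasure m₀] {m : ℕ}
    {A : Type*} [CStarAlgebra A] [PartialOrder A] [StarOrderedRing A]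
    (a : Fin m → A) (ξ : Fin m → A →L[ℂ] ℂ) (p q : ℝ) (hpq : 0 < p + q)
    (ha : ‖∑ j, star (a j) * a j‖ ≤ p) (hb : ‖∑ j, a j * star (a j)‖ ≤ q) :
    ∃ b : Fin m → A, ‖∑ j, star (b j) * b j‖ ≤ p / 4 ∧ ‖∑ j, b j * star (b j)‖ ≤ q / 4 ∧
      ‖∑ j, ξ j (a j)‖ ≤ (√(p + q) / 2) *
        (∫ z : Fin m → Circle, ‖∑ j, (z j : ℂ) • ξ j‖ ∂(Measure.pi fun _ : Fin m => m₀))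
        + ‖∑ j, ξ j (b j)‖ := by
  have hp : 0 ≤ p := (norm_nonneg _).trans ha
  have hq : 0 ≤ q := (norm_nonneg _).trans hb
  set μ : Measure (Fin m → Circle) := Measure.pi fun _ : Fin m => m₀ with hμ
  have hint : ∀ {E : Type _} [NormedAddCommGroup E] {f : (Fin m → Circle) → E},
      Continuous f → Integrable f μ :=
    fun {E} _ {f} hf => hf.integrable_of_hasCompactSupport (HasCompactSupport.of_compactSpace f)
  have hintC : ∀ {f : (Fin m → Circle) → ℂ}, Continuous f → Integrable f μ :=
    fun {f} hf => hf.integrable_of_hasCompactSupport (HasCompactSupport.of_compactSpace f)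
  have hintR : ∀ {f : (Fin m → Circle) → ℝ}, Continuous f → Integrable f μ :=
    fun {f} hf => hf.integrable_of_hasCompactSupport (HasCompactSupport.of_compactSpace f)
  let e : Fin m → (Fin m → Circle) → ℂ := fun j z => (z j : ℂ)
  let e' : Fin m → (Fin m → Circle) → ℂ := fun j z => star (z j : ℂ)
  have he : ∀ j, Continuous (e j) := fun j => by simp only [e]; fun_prop
  have he' : ∀ j, Continuous (e' j) := fun j => by simp only [e']; fun_prop
  have hee : ∀ j z, star (e j z) * e j z = 1 := fun j z => by
    simp only [e]; rw [mul_comm]; simp [Complex.mul_conj]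
  have m4 : ∀ i j k l, ∫ x, star (e i x) * e j x * (star (e k x) * e l x) ∂μ =
      (if i = j ∧ k = l then 1 else 0) + (if i = l ∧ j = k then 1 else 0)
        - (if i = j ∧ j = k ∧ k = l then 1 else 0) := aux_moment m₀ m
  have m4' : ∀ i j k l, ∫ x, star (e' i x) * e' j x * (star (e' k x) * e' l x) ∂μ =
      (if i = j ∧ k = l then 1 else 0) + (if i = l ∧ j = k then 1 else 0)
        - (if i = j ∧ j = k ∧ k = l then 1 else 0) := by
    intro i j k l
    have := m4 j i l k
    have h : ∀ x, star (e' i x) * e' j x * (star (e' k x) * e' l x)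
      = star (e j x) * e i x * (star (e l x) * e k x) := fun x => by
        simp only [e, e', star_star]; ring
    simp only [h, this]
    grind
  have m2 : ∀ i j, ∫ x, star (e i x) * e j x ∂μ = if i = j then 1 else 0 := by
    intro i j
    have := m4 i j i i
    simp only [hee, mul_one] at this
    rw [this]; grind
  have m2' : ∀ i j, ∫ x, star (e' i x) * e' j x ∂μ = if i = j then 1 else 0 := by
    intro i j
    have := m2 j i
    have h : ∀ x, star (e' i x) * e' j x = star (e j x) * e i x := fun x => by
      simp only [e, e', star_star]; ring
    simp only [h, this]; grind
  set t : ℝ := 1 / (p + q) with ht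
  have ht0 : 0 < t := by positivity
  let Y : (Fin m → Circle) → A := fun z => ∑ j, e' j z • a j
  have hY : Continuous Y := by simp only [Y]; fun_prop
  let u : (Fin m → Circle) → A := fun z => 1 + t • (star (Y z) * Y z)
  have hu : Continuous u := by simp only [u]; fun_prop
  have huu : ∀ z, IsUnit (u z) := fun z =>
    CStarAlgebra.isUnit_of_le 1 (le_add_of_nonneg_right
      (smul_nonneg ht0.le (star_mul_self_nonneg _))) isStrictlyPositive_one
  let v : (Fin m → Circle) → A := fun z => Ring.inverse (u z)
  have hv : Continuous v := by
    refine continuous_iff_continuousAt.mpr fun z => ?_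
    obtain ⟨w, hw⟩ := huu z
    have := NormedRing.inverse_continuousAt w
    rw [hw] at this
    exact ContinuousAt.comp (f := u) this hu.continuousAt
  have hvu : ∀ z, v z * (1 + t • (star (Y z) * Y z)) = 1 := fun z => Ring.inverse_mul_cancel _ (huu z)
  have huv : ∀ z, (1 + t • (star (Y z) * Y z)) * v z = 1 := fun z => Ring.mul_inverse_cancel _ (huu z)
  have hF := fun z => aux_F (Y z) (v z) t ht0 (hvu z) (huv z)
  let Z : (Fin m → Circle) → A := fun z => Y z - Y z * v z
  have hZ : Continuous Z := by simp only [Z]; fun_prop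
  let b : Fin m → A := fun j => ∫ z, star (e' j z) • Z z ∂μ
  have hstarint : ∀ f : (Fin m → Circle) → A, ∫ z, star (f z) ∂μ = star (∫ z, f z ∂μ) := fun f =>
    (starL' ℝ (A := A)).integral_comp_comm f
  have fin : ∀ (T : A) (r s : ℝ), 0 ≤ r → r + s = p + q → T ≤ (t/4) • ((r * (r + s)) • (1 : A)) →
      0 ≤ T → ‖T‖ ≤ r / 4 := by
    intro T r s hr hrs h1 h0
    rw [CStarAlgebra.norm_le_iff_le_algebraMap _ (by positivity) h0, Algebra.algebraMap_eq_smul_one]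
    refine h1.trans (le_of_eq ?_)
    rw [smul_smul, hrs, ht]
    congr 1
    field_simp
  refine ⟨b, ?_, ?_, ?_⟩
  · refine fin _ p q hp rfl ?_ (Finset.sum_nonneg fun i _ => star_mul_self_nonneg _)
    refine (aux_bessel μ e' he' m2' Z hZ).trans ?_
    calc _ ≤ ∫ z, (t/4) • (star (Y z) * Y z * (star (Y z) * Y z)) ∂μ :=
          integral_mono (hint (by fun_prop)) (hint (by fun_prop)) fun z => (hF z).2.1
      _ = (t/4) • ∫ z, (star (Y z) * Y z * (star (Y z) * Y z)) ∂μ := integral_smul _ _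
      _ ≤ _ := by
        have := aux_fourth μ e' he' m4' a p q ha hb
        exact smul_le_smul_of_nonneg_left this (by positivity)
  · refine fin _ q p hq (add_comm _ _) ?_ (Finset.sum_nonneg fun i _ => mul_star_self_nonneg _)
    have hbess := aux_bessel μ e he m2 (fun z => star (Z z)) (by fun_prop)
    have hb' : ∀ j, ∫ z, star (e j z) • star (Z z) ∂μ = star (b j) := fun j => by
      simp only [b, ← hstarint]
      simp only [star_smul, e, e', star_star]
    simp only [hb', star_star] at hbess
    refine hbess.trans ?_
    calc _ ≤ ∫ z, (t/4) • (Y z * star (Y z) * (Y z * star (Y z))) ∂μ :=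
          integral_mono (hint (by fun_prop)) (hint (by fun_prop)) fun z => (hF z).2.2
      _ = (t/4) • ∫ z, (Y z * star (Y z) * (Y z * star (Y z))) ∂μ := integral_smul _ _
      _ ≤ _ := by
        have := aux_fourth μ e he m4 (fun j => star (a j)) q p (by simpa using hb) (by simpa using ha)
        have hst : ∀ z, ∑ j, e j z • star (a j) = star (Y z) := fun z => by
          simp only [Y, star_sum, star_smul, e, e', star_star]
        simp only [hst, star_star] at this
        exact smul_le_smul_of_nonneg_left this (by positivity)
  · have hab : ∀ j, a j = b j + ∫ z, e j z • (Y z * v z) ∂μ := by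
      intro j
      have h1 : ∫ z, e j z • Y z ∂μ = a j := by
        simp only [Y, Finset.smul_sum, smul_smul]
        rw [integral_finsetSum _ (fun i _ => hint (by fun_prop))]
        have : ∀ i, ∫ z, (e j z * e' i z) • a i ∂μ = if j = i then a i else 0 := by
          intro i
          rw [integral_smul_const]
          have := m2' j i
          simp only [e', star_star] at this
          simp only [e, e', this]
          split_ifs <;> simp
        simp only [this, Finset.sum_ite_eq, Finset.mem_univ, if_true]
      have h2 : b j = ∫ z, e j z • Y z ∂μ - ∫ z, e j z • (Y z * v z) ∂μ := by
        rw [← integral_sub (hint (by fun_prop)) (hint (by fun_prop))]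
        simp only [b, Z, e, e', star_star, smul_sub]
      rw [h2, h1]; abel
    have hsum : ∑ j, ξ j (a j) = ∑ j, ξ j (b j) + ∫ z, (∑ j, e j z • ξ j) (Y z * v z) ∂μ := by
      have h3 : ∫ z, (∑ j, e j z • ξ j) (Y z * v z) ∂μ = ∑ j, ξ j (∫ z, e j z • (Y z * v z) ∂μ) := by
        simp only [_root_.sum_apply, _root_.smul_apply]
        rw [integral_finsetSum _ (fun i _ => hintC (by fun_prop))]
        refine Finset.sum_congr rfl fun j _ => ?_
        rw [← (ξ j).integral_comp_comm (hint (by fun_prop))]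
        simp only [map_smul]
      rw [h3, ← Finset.sum_add_distrib]
      refine Finset.sum_congr rfl fun j _ => ?_
      rw [← map_add, ← hab j]
    rw [hsum, add_comm]
    refine (norm_add_le _ _).trans ?_
    gcongr
    have hC : 1 / (2 * √t) = √(p + q) / 2 := by
      rw [ht, Real.sqrt_div zero_le_one, Real.sqrt_one]
      have : √(p+q) ≠ 0 := (Real.sqrt_pos.mpr hpq).ne'
      field_simp
    calc _ ≤ ∫ z, ‖(∑ j, e j z • ξ j) (Y z * v z)‖ ∂μ := norm_integral_le_integral_norm _
      _ ≤ ∫ z, (√(p + q) / 2) * ‖∑ j, e j z • ξ j‖ ∂μ := by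
        refine integral_mono (hintR ?_) (hintR (by fun_prop)) fun z => ?_
        · exact (Continuous.clm_apply (by fun_prop) (by fun_prop)).norm
        · refine (ContinuousLinearMap.le_opNorm _ _).trans ?_
          rw [mul_comm]
          gcongr
          rw [← hC]
          exact (hF z).1
      _ = _ := integral_const_mul _ _

theorem aux_main [MeasurableSpace Circle] [BorelSpace Circle]
    (m₀ : Measure Circle) [m₀.IsHaarMeasure] [IsProbabilityMeasure m₀] {m : ℕ}
    {A : Type*} [CStarAlgebra A] [PartialOrder A] [StarOrderedRing A]
    (ξ : Fin m → A →L[ℂ] ℂ) (n : ℕ) : ∀ (a : Fin m → A) (p q : ℝ),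
    ‖∑ j, star (a j) * a j‖ ≤ p → ‖∑ j, a j * star (a j)‖ ≤ q →
    ‖∑ j, ξ j (a j)‖ ≤ √(p + q) *
        ((∫ z : Fin m → Circle, ‖∑ j, (z j : ℂ) • ξ j‖ ∂(Measure.pi fun _ : Fin m => m₀))
        + (∑ j, ‖ξ j‖) / 2 ^ n) := by
  set I := ∫ z : Fin m → Circle, ‖∑ j, (z j : ℂ) • ξ j‖ ∂(Measure.pi fun _ : Fin m => m₀) with hI
  have hI0 : 0 ≤ I := integral_nonneg fun z => norm_nonneg _
  have base : ∀ (a : Fin m → A) (p q : ℝ),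
    ‖∑ j, star (a j) * a j‖ ≤ p → ‖∑ j, a j * star (a j)‖ ≤ q →
    ‖∑ j, ξ j (a j)‖ ≤ √(p + q) * ∑ j, ‖ξ j‖ := by
    intro a p q ha hb
    have hp : 0 ≤ p := (norm_nonneg _).trans ha
    have hq : 0 ≤ q := (norm_nonneg _).trans hb
    rw [Finset.mul_sum]
    refine (norm_sum_le _ _).trans (Finset.sum_le_sum fun j _ => ?_)
    refine ((ξ j).le_opNorm _).trans ?_
    rw [mul_comm]
    gcongr
    apply Real.le_sqrt_of_sq_le
    have h1 : star (a j) * a j ≤ ∑ j, star (a j) * a j :=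
      Finset.single_le_sum (f := fun j => star (a j) * a j)
        (fun i _ => star_mul_self_nonneg _) (Finset.mem_univ j)
    have h2 := CStarAlgebra.norm_le_norm_of_nonneg_of_le (star_mul_self_nonneg _) h1
    rw [CStarRing.norm_star_mul_self] at h2
    nlinarith
  induction n with
  | zero =>
    intro a p q ha hb
    refine (base a p q ha hb).trans ?_
    gcongr
    simp [hI0]
  | succ n ih =>
    intro a p q ha hb
    have hp : 0 ≤ p := (norm_nonneg _).trans ha
    have hq : 0 ≤ q := (norm_nonneg _).trans hb
    rcases (add_nonneg hp hq).eq_or_lt with h | h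
    · have := base a p q ha hb
      rw [← h] at this ⊢
      simpa using this
    obtain ⟨b, hb1, hb2, hb3⟩ := aux_step m₀ a ξ p q h ha hb
    have h4 := ih b _ _ hb1 hb2
    have h5 : √(p / 4 + q / 4) = √(p + q) / 2 := by
      rw [← add_div, Real.sqrt_div' _ (by norm_num)]
      congr 1
      rw [show (4:ℝ) = 2^2 by norm_num, Real.sqrt_sq (by norm_num)]
    rw [h5] at h4
    refine hb3.trans ((add_le_add_right h4 _).trans (le_of_eq ?_))
    rw [← hI, pow_succ]
    field_simp
    ring

theorem aux_sqrt (p q : ℝ) (hp0 : 0 ≤ p) (hq0 : 0 ≤ q) : √(p + q) ≤ √p + √q := by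
  rw [Real.sqrt_le_left (by positivity)]
  nlinarith [Real.sq_sqrt hp0, Real.sq_sqrt hq0, mul_nonneg (Real.sqrt_nonneg p) (Real.sqrt_nonneg q)]

/-- non-commutative Khintchine/Paley inequality of Lust-Piquard–Pisier, matrix
case: with `M = M_N(ℂ) = B(ℂ^N)` with operator norm, `a_j ∈ M`, `ξ_j ∈ M*`, and `μ` the
Haar probability on `𝕋^m`,
`|Σ ξ_j(a_j)| ≤ (∫ ‖Σ z_j ξ_j‖_{M*} dμ) · (‖Σ a_j*a_j‖^{1/2} + ‖Σ a_j a_j*‖^{1/2})`. -/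
theorem stmt_13 [MeasurableSpace Circle] [BorelSpace Circle]
    (m₀ : Measure Circle) [m₀.IsHaarMeasure] [IsProbabilityMeasure m₀]
    (N m : ℕ) (hN : 1 ≤ N) (hm : 1 ≤ m)
    (a : Fin m → EuclideanSpace ℂ (Fin N) →L[ℂ] EuclideanSpace ℂ (Fin N))
    (ξ : Fin m → (EuclideanSpace ℂ (Fin N) →L[ℂ] EuclideanSpace ℂ (Fin N)) →L[ℂ] ℂ) :
    ‖∑ j, ξ j (a j)‖ ≤
      (∫ z : Fin m → Circle, ‖∑ j, (z j : ℂ) • ξ j‖ ∂(Measure.pi fun _ : Fin m => m₀)) *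
      (Real.sqrt ‖∑ j, (ContinuousLinearMap.adjoint (a j)).comp (a j)‖ +
       Real.sqrt ‖∑ j, (a j).comp (ContinuousLinearMap.adjoint (a j))‖) := by
  have key := fun n => aux_main m₀ ξ n a _ _ le_rfl le_rfl
  set I := ∫ z : Fin m → Circle, ‖∑ j, (z j : ℂ) • ξ j‖ ∂(Measure.pi fun _ : Fin m => m₀) with hI
  have hI0 : 0 ≤ I := integral_nonneg fun z => ContinuousLinearMap.opNorm_nonneg _
  set p := ‖∑ j, star (a j) * a j‖ with hp
  set q := ‖∑ j, a j * star (a j)‖ with hq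
  change _ ≤ I * (√p + √q)
  have hlim : Filter.Tendsto (fun n : ℕ => √(p + q) * (I + (∑ j, ‖ξ j‖) / 2 ^ n)) Filter.atTop
      (nhds (√(p + q) * (I + 0))) := by
    refine Filter.Tendsto.const_mul _ (Filter.Tendsto.const_add _ ?_)
    exact tendsto_const_nhds.div_atTop (tendsto_pow_atTop_atTop_of_one_lt (by norm_num))
  have h1 := ge_of_tendsto' hlim key
  rw [add_zero, mul_comm] at h1
  refine h1.trans ?_
  gcongr
  exact aux_sqrt p q (ContinuousLinearMap.opNorm_nonneg _) (ContinuousLinearMap.opNorm_nonneg _)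
end
end

section
/- Let G be a group, φ : G → ℂ, and C ≥ 0. Suppose that for every function ε : G → ℂ with |ε(x)| ≤ 1 for all x ∈ G, the kernel (s,t) ↦ ε(st)·φ(st) on G × G is a Schur multiplier of norm at most C. Then for every function ξ : G × G → ℂ with |ξ(s,t)| ≤ 1 for all (s,t), the kernel (s,t) ↦ ξ(s,t)·φ(st) is a Schur multiplier of norm at most 8C. -/
open scoped ENNReal NNReal
open MeasureTheory ContinuousLinearMap

noncomputable section

section aux
open scoped InnerProductSpace ComplexConjugate

lemma aux_trunc {H : Type*} [NormedAddCommGroup H] [InnerProductSpace ℂ H] [CompleteSpace H]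
    (T : H →L[ℂ] H) : ∃ T1 T2 : H →L[ℂ] H, T = T1 + T2 ∧ ‖T1‖ ≤ 1 ∧
      (∀ v, ‖T2 v‖ ^ 2 ≤ 1 / 4 * ‖(adjoint T) (T v)‖ ^ 2) ∧
      (∀ v, ‖(adjoint T2) v‖ ^ 2 ≤ 1 / 4 * ‖T ((adjoint T) v)‖ ^ 2) := by
  obtain ⟨D, hD⟩ : ∃ D : H →L[ℂ] H, D = adjoint T * T := ⟨_, rfl⟩
  have hDs : star D = D := by
    rw [hD, ← ContinuousLinearMap.star_eq_adjoint]; simp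
  have hpos : (0 : H →L[ℂ] H) ≤ D := by
    rw [hD, ← ContinuousLinearMap.star_eq_adjoint]; exact star_mul_self_nonneg T
  have hu : IsUnit (1 + D) := by
    have h1 : IsStrictlyPositive (1 + D) := by
      exact IsStrictlyPositive.add_nonneg isStrictlyPositive_one hpos
    exact h1.isUnit
  obtain ⟨U, hU⟩ := hu
  obtain ⟨R, hR⟩ : ∃ R : H →L[ℂ] H, R = ↑U⁻¹ := ⟨_, rfl⟩
  have hR1 : (1 + D) * R = 1 := by rw [← hU, hR]; simp
  have hR2 : R * (1 + D) = 1 := by rw [← hU, hR]; simp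
  have hRs : star R = R := by
    have h3 : (1 + D) * star R = 1 := by
      have := congrArg star hR2
      simpa [hDs] using this
    calc star R = (R * (1 + D)) * star R := by rw [hR2, one_mul]
      _ = R := by rw [mul_assoc, h3, mul_one]
  have hRD : R * D = D * R := by
    have h1 : R + D * R = 1 := by simpa [add_mul] using hR1
    have h2 : R + R * D = 1 := by simpa [mul_add] using hR2
    exact add_left_cancel (h2.trans h1.symm)
  have hRv : ∀ v, R v + D (R v) = v := fun v => by
    have := congrArg (fun S : H →L[ℂ] H => S v) hR1
    simpa using this
  have hDv : ∀ v, D v = adjoint T (T v) := fun v => by rw [hD]; rfl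
  have key : ∀ u, ‖T u‖ ^ 2 ≤ 1 / 4 * ‖u + D u‖ ^ 2 := fun u => by
    have h1 := norm_add_sq (𝕜 := ℂ) u (D u)
    have h2 := norm_sub_sq (𝕜 := ℂ) u (D u)
    have h3 : ⟪u, D u⟫_ℂ = ((‖T u‖ ^ 2 : ℝ) : ℂ) := by
      rw [hDv, adjoint_inner_right, inner_self_eq_norm_sq_to_K]; simp
    rw [h3] at h1 h2
    have h4 : RCLike.re (((‖T u‖ ^ 2 : ℝ) : ℂ)) = ‖T u‖ ^ 2 := Complex.ofReal_re _
    rw [h4] at h1 h2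
    nlinarith [sq_nonneg ‖u - D u‖]
  refine ⟨T * R, T * D * R, ?_, ?_, ?_, ?_⟩
  · have : T * R + T * D * R = T * ((1 + D) * R) := by noncomm_ring
    rw [this, hR1, mul_one]
  · refine ContinuousLinearMap.opNorm_le_bound _ zero_le_one fun v => ?_
    have := key (R v)
    rw [hRv] at this
    change ‖T (R v)‖ ≤ _
    rw [one_mul]
    refine le_of_sq_le_sq ?_ (norm_nonneg _)
    nlinarith [sq_nonneg ‖v‖]
  · intro v
    have := key (D (R v))
    have h5 : D (R v) + D (D (R v)) = D v := by
      rw [← map_add, hRv]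
    rw [h5] at this
    rw [← hDv]
    exact this
  · intro v
    have h6 : adjoint (T * D * R) = D * R * adjoint T := by
      rw [← ContinuousLinearMap.star_eq_adjoint, ← ContinuousLinearMap.star_eq_adjoint]
      rw [star_mul, star_mul, hRs, hDs, ← mul_assoc, hRD]
    rw [h6]
    change ‖D (R (adjoint T v))‖ ^ 2 ≤ _
    obtain ⟨w, hw⟩ : ∃ w, w = R (adjoint T v) := ⟨_, rfl⟩
    have h7 : adjoint T v = w + D w := by rw [hw, hRv]
    rw [← hw, h7, map_add]
    have h1 := norm_add_sq (𝕜 := ℂ) (T w) (T (D w))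
    have h2 := norm_sub_sq (𝕜 := ℂ) (T w) (T (D w))
    have h3 : ⟪T w, T (D w)⟫_ℂ = ((‖D w‖ ^ 2 : ℝ) : ℂ) := by
      rw [← adjoint_inner_left, ← hDv, inner_self_eq_norm_sq_to_K]; simp
    rw [h3] at h1 h2
    have h4 : RCLike.re (((‖D w‖ ^ 2 : ℝ) : ℂ)) = ‖D w‖ ^ 2 := Complex.ofReal_re _
    rw [h4] at h1 h2
    nlinarith [sq_nonneg ‖T w - T (D w)‖]

def auxChi {G : Type*} (X : Finset G) (ω : X → ZMod 3) (x : G) : ℂ :=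
  open Classical in if hx : x ∈ X then ZMod.stdAddChar (ω ⟨x, hx⟩) else 1

lemma auxChi_norm {G : Type*} (X : Finset G) (ω : X → ZMod 3) (x : G) : ‖auxChi X ω x‖ = 1 := by
  unfold auxChi; split_ifs
  · exact AddChar.norm_apply _ _
  · simp

lemma auxChi_conj {G : Type*} (X : Finset G) (ω : X → ZMod 3) (x : G) :
    conj (auxChi X ω x) * auxChi X ω x = 1 := by
  rw [mul_comm, Complex.mul_conj, Complex.normSq_eq_norm_sq, auxChi_norm]; simp

open Classical in
lemma auxChi_sum {G : Type*} (X : Finset G) {a b c d : G} (ha : a ∈ X) (hb : b ∈ X) (hc : c ∈ X)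
    (hd : d ∈ X) (hac : a ≠ c) (had : a ≠ d) :
    ∑ ω : X → ZMod 3, auxChi X ω a * auxChi X ω b * conj (auxChi X ω c) * conj (auxChi X ω d)
      = 0 := by
  let ev : ∀ x : X, (X → ZMod 3) →+ ZMod 3 := fun x => Pi.evalAddMonoidHom _ x
  let f : (X → ZMod 3) →+ ZMod 3 := ev ⟨a, ha⟩ + ev ⟨b, hb⟩ - ev ⟨c, hc⟩ - ev ⟨d, hd⟩
  let ψ : AddChar (X → ZMod 3) ℂ := (ZMod.stdAddChar (N := 3)).compAddMonoidHom f
  have h1 : ∀ ω, auxChi X ω a * auxChi X ω b * conj (auxChi X ω c) * conj (auxChi X ω d) = ψ ω := by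
    intro ω
    simp only [auxChi, ha, hb, hc, hd, dif_pos, ψ, f, ev, AddChar.compAddMonoidHom_apply,
      AddMonoidHom.sub_apply, AddMonoidHom.add_apply, Pi.evalAddMonoidHom_apply,
      ← AddChar.map_neg_eq_conj, ← AddChar.map_add_eq_mul]
    congr 1
    ring
  simp_rw [h1]
  rw [AddChar.sum_eq_zero_iff_ne_zero]
  intro h0
  have h2 : ψ (Pi.single ⟨a, ha⟩ 1) = 1 := by rw [h0]; rfl
  have h3 : f (Pi.single ⟨a, ha⟩ 1) = 0 := by
    apply ZMod.injective_stdAddChar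
    rw [AddChar.map_zero_eq_one]; exact h2
  have h4 : f (Pi.single ⟨a, ha⟩ 1) = 1 + (if b = a then 1 else 0) := by
    simp [f, ev, Pi.single_apply, hac.symm, had.symm]
  rw [h4] at h3
  split_ifs at h3
  · exact absurd h3 (by decide)
  · exact absurd h3 (by decide)

/-- orthogonality gives a second moment identity -/
lemma aux_orth {Ω ι : Type*} [Fintype Ω] (F : Finset ι) (η : Ω → ι → ℂ)
    (k : ι → ℂ) (h1 : ∀ ω i, ‖η ω i‖ = 1)
    (h0 : ∀ i ∈ F, ∀ j ∈ F, i ≠ j → ∑ ω, η ω i * conj (η ω j) = 0) :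
    ∑ ω, ‖∑ i ∈ F, η ω i * k i‖ ^ 2 = Fintype.card Ω * ∑ i ∈ F, ‖k i‖ ^ 2 := by
  have h2 : ∀ z : ℂ, ((‖z‖ ^ 2 : ℝ) : ℂ) = z * conj z := fun z => by
    rw [Complex.mul_conj, Complex.normSq_eq_norm_sq]
  have : ((∑ ω, ‖∑ i ∈ F, η ω i * k i‖ ^ 2 : ℝ) : ℂ)
      = ((Fintype.card Ω * ∑ i ∈ F, ‖k i‖ ^ 2 : ℝ) : ℂ) := by
    rw [Complex.ofReal_sum, Complex.ofReal_mul, Complex.ofReal_sum]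
    simp_rw [h2, map_sum, Finset.sum_mul_sum]
    rw [Finset.sum_comm, Finset.mul_sum]
    refine Finset.sum_congr rfl fun i hi => ?_
    rw [Finset.sum_comm, Finset.sum_eq_single_of_mem i hi]
    · have : ∀ ω, η ω i * k i * conj (η ω i * k i) = k i * conj (k i) := fun ω => by
        have h3 := h2 (η ω i)
        rw [h1] at h3
        rw [map_mul]
        linear_combination (- k i * conj (k i)) * h3 + (k i * conj (k i)) * (by norm_num : ((1 ^ 2 : ℝ) : ℂ) = 1)
      rw [Finset.sum_congr rfl fun ω _ => this ω]
      simp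
    · intro j hj hij
      have := h0 i hi j hj hij.symm
      calc _ = ∑ ω, (η ω i * conj (η ω j)) * (k i * conj (k j)) := by
            refine Finset.sum_congr rfl fun ω _ => ?_
            rw [map_mul]; ring
        _ = 0 := by rw [← Finset.sum_mul, this, zero_mul]
  exact_mod_cast this

open Classical in
lemma aux_moment_s14 {G : Type*} (X : Finset G) (p : G → G → G)
    (hp1 : ∀ s t t', p s t = p s t' → t = t') (hp2 : ∀ s s' t, p s t = p s' t → s = s')
    (E F : Finset G) (hX : ∀ s ∈ E, ∀ t ∈ F, p s t ∈ X) (h : G → G → ℂ)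
    (hr : ∀ s ∈ E, ∑ t ∈ F, ‖h s t‖ ^ 2 ≤ 1) (hc : ∀ t ∈ F, ∑ s ∈ E, ‖h s t‖ ^ 2 ≤ 1)
    (s : G) (hs : s ∈ E) :
    ∑ ω : X → ZMod 3, ∑ s' ∈ E, ‖∑ t ∈ F, (auxChi X ω (p s t) * h s t) *
      conj (auxChi X ω (p s' t) * h s' t)‖ ^ 2 ≤ 2 * Fintype.card (X → ZMod 3) := by
  set N : ℝ := ((Fintype.card (X → ZMod 3) : ℕ) : ℝ) with hN
  have hN0 : 0 ≤ N := by positivity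
  rw [Finset.sum_comm, ← Finset.add_sum_erase _ _ hs]
  have hA : ∑ ω : X → ZMod 3, ‖∑ t ∈ F, (auxChi X ω (p s t) * h s t) *
      conj (auxChi X ω (p s t) * h s t)‖ ^ 2 ≤ N := by
    have : ∀ ω ∈ (Finset.univ : Finset (X → ZMod 3)), ‖∑ t ∈ F, (auxChi X ω (p s t) * h s t) *
      conj (auxChi X ω (p s t) * h s t)‖ ^ 2 ≤ 1 := by
      intro ω _
      have h1 : ‖∑ t ∈ F, (auxChi X ω (p s t) * h s t) *
          conj (auxChi X ω (p s t) * h s t)‖ ≤ 1 := by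
        refine (norm_sum_le _ _).trans (le_trans (le_of_eq ?_) (hr s hs))
        refine Finset.sum_congr rfl fun t _ => ?_
        rw [norm_mul, RCLike.norm_conj, norm_mul, auxChi_norm]; ring
      exact pow_le_one₀ (norm_nonneg _) h1
    refine (Finset.sum_le_sum this).trans (le_of_eq ?_)
    simp [hN]
  have hB : ∀ s' ∈ E.erase s, ∑ ω : X → ZMod 3, ‖∑ t ∈ F, (auxChi X ω (p s t) * h s t) *
      conj (auxChi X ω (p s' t) * h s' t)‖ ^ 2 = N * ∑ t ∈ F, ‖h s t‖ ^ 2 * ‖h s' t‖ ^ 2 := by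
    intro s' hs'
    obtain ⟨hne, hs'E⟩ := Finset.mem_erase.1 hs'
    have := aux_orth F (fun (ω : X → ZMod 3) t => auxChi X ω (p s t) * conj (auxChi X ω (p s' t)))
      (fun t => h s t * conj (h s' t)) (fun ω t => by
        rw [norm_mul, RCLike.norm_conj, auxChi_norm, auxChi_norm, one_mul]) (by
        intro t ht t' ht' htt'
        rw [← auxChi_sum X (hX s hs t ht) (hX s' hs'E t' ht') (hX s' hs'E t ht) (hX s hs t' ht')
          (fun hh => hne (hp2 _ _ _ hh).symm) (fun hh => htt' (hp1 _ _ _ hh))]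
        refine Finset.sum_congr rfl fun ω _ => ?_
        simp only [map_mul, Complex.conj_conj]; ring)
    simp only [norm_mul, RCLike.norm_conj, mul_pow] at this
    rw [← this]
    refine Finset.sum_congr rfl fun ω _ => ?_
    congr 2
    refine Finset.sum_congr rfl fun t _ => ?_
    rw [map_mul]; ring
  rw [Finset.sum_congr rfl hB, ← Finset.mul_sum]
  have hD : ∑ s' ∈ E.erase s, ∑ t ∈ F, ‖h s t‖ ^ 2 * ‖h s' t‖ ^ 2 ≤ 1 := by
    rw [Finset.sum_comm]
    refine le_trans (Finset.sum_le_sum fun t ht => ?_) (hr s hs)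
    rw [← Finset.mul_sum]
    refine mul_le_of_le_one_right (by positivity) (le_trans ?_ (hc t ht))
    exact Finset.sum_le_sum_of_subset_of_nonneg (Finset.erase_subset _ _)
      (fun _ _ _ => by positivity)
  nlinarith

lemma aux_norm {G H : Type*} [NormedAddCommGroup H] [InnerProductSpace ℂ H]
    (e : G → H) (he : Orthonormal ℂ e) (J : Finset G) (k : G → ℂ) :
    ‖∑ j ∈ J, k j • e j‖ ^ 2 = ∑ j ∈ J, ‖k j‖ ^ 2 := by
  have h1 := he.inner_sum k k J
  rw [inner_self_eq_norm_sq_to_K] at h1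
  have h2 : ((‖∑ j ∈ J, k j • e j‖ ^ 2 : ℝ) : ℂ) = ((∑ j ∈ J, ‖k j‖ ^ 2 : ℝ) : ℂ) := by
    push_cast
    refine Eq.trans h1 (Finset.sum_congr rfl fun j _ => ?_)
    rw [mul_comm, Complex.mul_conj, Complex.normSq_eq_norm_sq]; push_cast; rfl
  exact_mod_cast h2

lemma aux_op {G H : Type*} [NormedAddCommGroup H] [InnerProductSpace ℂ H] [CompleteSpace H]
    (e : G → H) (he : Orthonormal ℂ e) (E F : Finset G) (c : G → G → ℂ) :
    ∃ Y : H →L[ℂ] H, (∀ s ∈ E, ∀ t ∈ F, ⟪e t, Y (e s)⟫_ℂ = c s t) ∧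
      (∀ s ∈ E, ‖(adjoint Y) (Y (e s))‖ ^ 2 = ∑ s' ∈ E, ‖∑ t ∈ F, c s t * conj (c s' t)‖ ^ 2) ∧
      (∀ t ∈ F, ‖Y ((adjoint Y) (e t))‖ ^ 2 = ∑ t' ∈ F, ‖∑ s ∈ E, c s t * conj (c s t')‖ ^ 2) := by
  classical
  have hee : ∀ i j, ⟪e i, e j⟫_ℂ = if i = j then 1 else 0 := orthonormal_iff_ite.1 he
  obtain ⟨Y, hY⟩ : ∃ Y : H →L[ℂ] H, Y = ∑ s ∈ E, ∑ t ∈ F, c s t • InnerProductSpace.rankOne ℂ (e t) (e s) :=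
    ⟨_, rfl⟩
  have hYv : ∀ v, Y v = ∑ s ∈ E, ∑ t ∈ F, (c s t * ⟪e s, v⟫_ℂ) • e t := fun v => by
    rw [hY]; simp [mul_smul]
  have hYe : ∀ s ∈ E, Y (e s) = ∑ t ∈ F, c s t • e t := fun s hs => by
    rw [hYv, Finset.sum_eq_single_of_mem s hs]
    · simp [he.1]
    · intro b _ hb; simp [hee, hb]
  have hYa : ∀ t ∈ F, (adjoint Y) (e t) = ∑ s ∈ E, conj (c s t) • e s := fun t ht => by
    refine ext_inner_right ℂ fun v => ?_
    rw [adjoint_inner_left, hYv, sum_inner, inner_sum]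
    refine Finset.sum_congr rfl fun s _ => ?_
    rw [inner_sum, Finset.sum_eq_single_of_mem t ht]
    · simp [inner_smul_left, inner_smul_right, he.1]
    · intro b _ hb; simp [inner_smul_right, hee, Ne.symm hb]
  have hns := aux_norm e he
  refine ⟨Y, ?_, ?_, ?_⟩
  · intro s hs t ht
    rw [hYe s hs, inner_sum, Finset.sum_eq_single_of_mem t ht]
    · simp [inner_smul_right, he.1]
    · intro b _ hb; simp [inner_smul_right, hee, Ne.symm hb]
  · intro s hs
    rw [hYe s hs, map_sum, ← hns]
    congr 2
    simp_rw [Finset.sum_smul]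
    rw [Finset.sum_comm]
    refine Finset.sum_congr rfl fun t ht => ?_
    rw [map_smul, hYa t ht, Finset.smul_sum]
    simp_rw [mul_smul]
  · intro t ht
    have h3 : ∀ t', ‖∑ s ∈ E, c s t * conj (c s t')‖ = ‖∑ s ∈ E, conj (c s t) * c s t'‖ := by
      intro t'
      rw [← RCLike.norm_conj, map_sum]
      simp
    simp_rw [h3]
    rw [hYa t ht, map_sum, ← hns]
    congr 2
    simp_rw [Finset.sum_smul]
    rw [Finset.sum_comm]
    refine Finset.sum_congr rfl fun s hs => ?_
    rw [map_smul, hYe s hs, Finset.smul_sum]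
    simp_rw [mul_smul]

lemma aux_avg {Ω : Type*} [Fintype Ω] (f : Ω → ℂ) :
    ‖∑ ω, f ω‖ ^ 2 ≤ Fintype.card Ω * ∑ ω, ‖f ω‖ ^ 2 := by
  refine (pow_le_pow_left₀ (norm_nonneg _) (norm_sum_le _ _) 2).trans ?_
  have := sq_sum_le_card_mul_sum_sq (s := (Finset.univ : Finset Ω)) (f := fun ω => ‖f ω‖)
  simpa using this

/-- averaged remainder bound -/
lemma aux_rem {Ω ι : Type*} [Fintype Ω] [Nonempty Ω] (F : Finset ι) (f : Ω → ι → ℂ)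
    (g : Ω → ℝ) (hfg : ∀ ω, ∑ i ∈ F, ‖f ω i‖ ^ 2 ≤ 1 / 4 * g ω)
    (hg : ∑ ω, g ω ≤ 2 * Fintype.card Ω) :
    ∑ i ∈ F, ‖(4 / 3 : ℂ) * ((Fintype.card Ω : ℂ)⁻¹ * ∑ ω, f ω i)‖ ^ 2 ≤ 1 := by
  have hN : (0 : ℝ) < Fintype.card Ω := by exact_mod_cast Fintype.card_pos
  have h1 : ∀ i ∈ F, ‖(4 / 3 : ℂ) * ((Fintype.card Ω : ℂ)⁻¹ * ∑ ω, f ω i)‖ ^ 2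
      ≤ 16 / 9 * (Fintype.card Ω : ℝ)⁻¹ * ∑ ω, ‖f ω i‖ ^ 2 := by
    intro i _
    have h2 := aux_avg (fun ω => f ω i)
    rw [norm_mul, norm_mul, mul_pow, mul_pow, norm_inv, Complex.norm_natCast]
    have h3 : ‖(4 / 3 : ℂ)‖ = 4 / 3 := by
      rw [norm_div]; simp
    rw [h3]
    calc (4 / 3 : ℝ) ^ 2 * ((Fintype.card Ω : ℝ)⁻¹ ^ 2 * ‖∑ ω, f ω i‖ ^ 2)
        ≤ (4 / 3 : ℝ) ^ 2 * ((Fintype.card Ω : ℝ)⁻¹ ^ 2 * (Fintype.card Ω * ∑ ω, ‖f ω i‖ ^ 2)) := by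
          gcongr
      _ = _ := by field_simp; ring
  refine (Finset.sum_le_sum h1).trans ?_
  rw [← Finset.mul_sum, Finset.sum_comm]
  have h4 : ∑ ω, ∑ i ∈ F, ‖f ω i‖ ^ 2 ≤ 1 / 4 * (2 * Fintype.card Ω) := by
    refine (Finset.sum_le_sum fun ω _ => hfg ω).trans ?_
    rw [← Finset.mul_sum]
    gcongr
  calc _ ≤ 16 / 9 * (Fintype.card Ω : ℝ)⁻¹ * (1 / 4 * (2 * Fintype.card Ω)) := by gcongr
    _ ≤ 1 := by field_simp; norm_num

/-- the bilinear bound on a finite block -/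
def AuxP {G : Type*} [Group G] (φ : G → ℂ) (E F : Finset G) (K : ℝ) : Prop :=
  ∀ h : G → G → ℂ, (∀ s ∈ E, ∑ t ∈ F, ‖h s t‖ ^ 2 ≤ 1) → (∀ t ∈ F, ∑ s ∈ E, ‖h s t‖ ^ 2 ≤ 1) →
    ∀ α β : G → ℂ, ‖∑ s ∈ E, ∑ t ∈ F, φ (s * t) * h s t * α s * β t‖ ≤
      K * (√(∑ s ∈ E, ‖α s‖ ^ 2) * √(∑ t ∈ F, ‖β t‖ ^ 2))

lemma aux_init {G : Type*} [Group G] (φ : G → ℂ) (E F : Finset G) :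
    AuxP φ E F (∑ s ∈ E, ∑ t ∈ F, ‖φ (s * t)‖) := by
  intro h hr hc α β
  refine (norm_sum_le _ _).trans ?_
  rw [Finset.sum_mul]
  refine Finset.sum_le_sum fun s hs => (norm_sum_le _ _).trans ?_
  rw [Finset.sum_mul]
  refine Finset.sum_le_sum fun t ht => ?_
  have h1 : ‖h s t‖ ≤ 1 := by
    have := (Finset.single_le_sum (f := fun t => ‖h s t‖ ^ 2) (fun _ _ => by positivity) ht).trans
      (hr s hs)
    have := abs_le_of_sq_le_sq (a := ‖h s t‖) (b := 1) (by simpa using this) zero_le_one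
    exact (le_abs_self _).trans this
  have h2 : ‖α s‖ ≤ √(∑ s ∈ E, ‖α s‖ ^ 2) :=
    Real.le_sqrt_of_sq_le (Finset.single_le_sum (f := fun s => ‖α s‖ ^ 2)
      (fun _ _ => by positivity) hs)
  have h3 : ‖β t‖ ≤ √(∑ t ∈ F, ‖β t‖ ^ 2) :=
    Real.le_sqrt_of_sq_le (Finset.single_le_sum (f := fun s => ‖β s‖ ^ 2)
      (fun _ _ => by positivity) ht)
  rw [norm_mul, norm_mul, norm_mul, mul_assoc]
  calc ‖φ (s * t)‖ * ‖h s t‖ * (‖α s‖ * ‖β t‖) ≤ ‖φ (s * t)‖ * 1 *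
        (√(∑ s ∈ E, ‖α s‖ ^ 2) * √(∑ t ∈ F, ‖β t‖ ^ 2)) := by gcongr
    _ = _ := by rw [mul_one]

lemma aux_step_s14 {G H : Type*} [Group G] [NormedAddCommGroup H] [InnerProductSpace ℂ H]
    [CompleteSpace H] (e : G → H) (he : Orthonormal ℂ e) (φ : G → ℂ) (C : ℝ) (hC : 0 ≤ C)
    (hyp : ∀ ε : G → ℂ, (∀ x, ‖ε x‖ ≤ 1) → ∀ A : H →L[ℂ] H, ∃ B : H →L[ℂ] H,
      (∀ s t, ⟪e t, B (e s)⟫_ℂ = ε (s * t) * φ (s * t) * ⟪e t, A (e s)⟫_ℂ) ∧ ‖B‖ ≤ C * ‖A‖)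
    (E F : Finset G) (K : ℝ) (hK : AuxP φ E F K) : AuxP φ E F (C + 3 / 4 * K) := by
  classical
  intro h hr hc α β
  set a := √(∑ s ∈ E, ‖α s‖ ^ 2) with ha
  set b := √(∑ t ∈ F, ‖β t‖ ^ 2) with hb
  obtain ⟨X, hX⟩ : ∃ X : Finset G, ∀ s ∈ E, ∀ t ∈ F, s * t ∈ X :=
    ⟨(E ×ˢ F).image (fun p => p.1 * p.2), fun s hs t ht =>
      Finset.mem_image.2 ⟨(s, t), Finset.mem_product.2 ⟨hs, ht⟩, rfl⟩⟩
  have hm1 := aux_moment_s14 X (fun s t => s * t) (fun s t t' h => mul_left_cancel h)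
    (fun s s' t h => mul_right_cancel h) E F hX h hr hc
  have hm2 := aux_moment_s14 X (fun t s => s * t) (fun s t t' h => mul_right_cancel h)
    (fun s s' t h => mul_left_cancel h) F E (fun t ht s hs => hX s hs t ht) (fun t s => h s t) hc hr
  choose Y hY1 hY2 hY3 using fun ω : X → ZMod 3 =>
    aux_op e he E F (fun s t => auxChi X ω (s * t) * h s t)
  choose Y1 Y2 hYY hYn hYa hYb using fun ω => aux_trunc (Y ω)
  choose B hB1 hB2 using fun ω : X → ZMod 3 => hyp (fun x => conj (auxChi X ω x))
    (fun x => by rw [RCLike.norm_conj, auxChi_norm]) (Y1 ω)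
  let f : (X → ZMod 3) → G → G → ℂ := fun ω s t => conj (auxChi X ω (s * t)) * ⟪e t, Y2 ω (e s)⟫_ℂ
  let N : ℂ := (Fintype.card (X → ZMod 3) : ℂ)
  have hN : N ≠ 0 := by simp [N]
  let r : G → G → ℂ := fun s t => (4 / 3 : ℂ) * (N⁻¹ * ∑ ω, f ω s t)
  have hnf : ∀ ω s t, ‖f ω s t‖ = ‖⟪e t, Y2 ω (e s)⟫_ℂ‖ := fun ω s t => by
    simp only [f]; rw [norm_mul, RCLike.norm_conj, auxChi_norm, one_mul]
  have hrr : ∀ s ∈ E, ∑ t ∈ F, ‖r s t‖ ^ 2 ≤ 1 := by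
    intro s hs
    refine aux_rem F (fun ω t => f ω s t) (fun ω => ‖(adjoint (Y ω)) (Y ω (e s))‖ ^ 2) ?_ ?_
    · intro ω
      refine le_trans ?_ (hYa ω (e s))
      simp_rw [hnf]
      exact he.sum_inner_products_le _
    · simp_rw [hY2 _ s hs]
      exact hm1 s hs
  have hrc : ∀ t ∈ F, ∑ s ∈ E, ‖r s t‖ ^ 2 ≤ 1 := by
    intro t ht
    refine aux_rem E (fun ω s => f ω s t) (fun ω => ‖Y ω ((adjoint (Y ω)) (e t))‖ ^ 2) ?_ ?_
    · intro ω
      refine le_trans ?_ (hYb ω (e t))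
      have : ∀ s, ‖f ω s t‖ = ‖⟪e s, (adjoint (Y2 ω)) (e t)⟫_ℂ‖ := fun s => by
        rw [hnf, adjoint_inner_right, norm_inner_symm]
      simp_rw [this]
      exact he.sum_inner_products_le _
    · simp_rw [hY3 _ t ht]
      exact hm2 t ht
  have hdec : ∀ s ∈ E, ∀ t ∈ F, φ (s * t) * h s t * α s * β t =
      N⁻¹ * ∑ ω, ⟪e t, B ω (e s)⟫_ℂ * α s * β t + (3 / 4 : ℂ) * (φ (s * t) * r s t * α s * β t) := by
    intro s hs t ht
    have h1 : ∀ ω, h s t = conj (auxChi X ω (s * t)) * ⟪e t, Y1 ω (e s)⟫_ℂ + f ω s t := by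
      intro ω
      have h2 := hY1 ω s hs t ht
      rw [hYY ω, ContinuousLinearMap.add_apply, inner_add_right] at h2
      simp only [f]
      rw [← mul_add, h2, ← mul_assoc, auxChi_conj, one_mul]
    have h3 : N * h s t = ∑ ω, (conj (auxChi X ω (s * t)) * ⟪e t, Y1 ω (e s)⟫_ℂ) + ∑ ω, f ω s t := by
      rw [← Finset.sum_add_distrib, ← Finset.sum_congr rfl fun ω _ => h1 ω]
      simp [N]
    have h4 : ∑ ω, ⟪e t, B ω (e s)⟫_ℂ * α s * β t =
        (∑ ω, (conj (auxChi X ω (s * t)) * ⟪e t, Y1 ω (e s)⟫_ℂ)) * (φ (s * t) * α s * β t) := by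
      rw [Finset.sum_mul]
      refine Finset.sum_congr rfl fun ω _ => ?_
      rw [hB1]; ring
    have h5 : ∑ ω, (conj (auxChi X ω (s * t)) * ⟪e t, Y1 ω (e s)⟫_ℂ) = N * h s t - ∑ ω, f ω s t := by
      rw [h3]; ring
    rw [h4, h5]
    simp only [r]
    field_simp
    ring
  have hsum : ∑ s ∈ E, ∑ t ∈ F, φ (s * t) * h s t * α s * β t =
      N⁻¹ * ∑ ω, ∑ s ∈ E, ∑ t ∈ F, ⟪e t, B ω (e s)⟫_ℂ * α s * β t +
      (3 / 4 : ℂ) * ∑ s ∈ E, ∑ t ∈ F, φ (s * t) * r s t * α s * β t := by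
    rw [Finset.sum_congr rfl fun s hs => Finset.sum_congr rfl fun t ht => hdec s hs t ht]
    simp_rw [Finset.sum_add_distrib, ← Finset.mul_sum]
    congr 2
    rw [Finset.sum_comm (s := (Finset.univ : Finset (X → ZMod 3)))]
    refine Finset.sum_congr rfl fun s _ => ?_
    exact Finset.sum_comm
  have hBb : ∀ ω, ‖∑ s ∈ E, ∑ t ∈ F, ⟪e t, B ω (e s)⟫_ℂ * α s * β t‖ ≤ C * (a * b) := by
    intro ω
    have h1 : ∑ s ∈ E, ∑ t ∈ F, ⟪e t, B ω (e s)⟫_ℂ * α s * β t =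
        ⟪∑ t ∈ F, conj (β t) • e t, B ω (∑ s ∈ E, α s • e s)⟫_ℂ := by
      rw [map_sum, inner_sum]
      refine Finset.sum_congr rfl fun s _ => ?_
      rw [sum_inner]
      refine Finset.sum_congr rfl fun t _ => ?_
      rw [map_smul, inner_smul_left, inner_smul_right, Complex.conj_conj]; ring
    have h2 : ‖∑ s ∈ E, α s • e s‖ = a := by
      rw [ha, ← aux_norm e he, Real.sqrt_sq (norm_nonneg _)]
    have h3 : ‖∑ t ∈ F, conj (β t) • e t‖ = b := by
      rw [← Real.sqrt_sq (norm_nonneg (∑ t ∈ F, conj (β t) • e t)), aux_norm e he]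
      simp [hb]
    rw [h1]
    refine (norm_inner_le_norm _ _).trans ?_
    rw [h3]
    have h4 : ‖B ω‖ ≤ C := (hB2 ω).trans (mul_le_of_le_one_right hC (hYn ω))
    have h5 := (B ω).le_of_opNorm_le h4 (∑ s ∈ E, α s • e s)
    rw [h2] at h5
    have hb0 : 0 ≤ b := Real.sqrt_nonneg _
    nlinarith
  rw [hsum]
  refine (norm_add_le _ _).trans ?_
  rw [add_mul]
  refine add_le_add ?_ ?_
  · rw [norm_mul, norm_inv]
    have hN' : ‖N‖ = (Fintype.card (X → ZMod 3) : ℝ) := by simp [N]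
    have hN0 : 0 < ‖N‖ := norm_pos_iff.2 hN
    have h6 : ‖∑ ω, ∑ s ∈ E, ∑ t ∈ F, ⟪e t, B ω (e s)⟫_ℂ * α s * β t‖ ≤ ‖N‖ * (C * (a * b)) := by
      refine (norm_sum_le _ _).trans ((Finset.sum_le_sum fun ω _ => hBb ω).trans (le_of_eq ?_))
      rw [hN']; simp
    rw [inv_mul_le_iff₀ hN0]
    exact h6
  · rw [norm_mul, mul_assoc]
    have h3 : ‖(3 / 4 : ℂ)‖ = 3 / 4 := by
      rw [norm_div]; simp
    rw [h3]
    exact mul_le_mul_of_nonneg_left (hK r hrr hrc α β) (by norm_num)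

lemma aux_core {G H : Type*} [Group G] [NormedAddCommGroup H] [InnerProductSpace ℂ H]
    [CompleteSpace H] (e : G → H) (he : Orthonormal ℂ e) (φ : G → ℂ) (C : ℝ) (hC : 0 ≤ C)
    (hyp : ∀ ε : G → ℂ, (∀ x, ‖ε x‖ ≤ 1) → ∀ A : H →L[ℂ] H, ∃ B : H →L[ℂ] H,
      (∀ s t, ⟪e t, B (e s)⟫_ℂ = ε (s * t) * φ (s * t) * ⟪e t, A (e s)⟫_ℂ) ∧ ‖B‖ ≤ C * ‖A‖)
    (E F : Finset G) : AuxP φ E F (8 * C) := by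
  have h1 : ∀ n : ℕ, AuxP φ E F (4 * C + (3 / 4) ^ n * (∑ s ∈ E, ∑ t ∈ F, ‖φ (s * t)‖)) := by
    intro n
    induction n with
    | zero =>
      intro h hr hc α β
      refine (aux_init φ E F h hr hc α β).trans ?_
      gcongr
      simp [hC]
    | succ n ih =>
      have := aux_step_s14 e he φ C hC hyp E F _ ih
      convert this using 1
      ring
  intro h hr hc α β
  have h2 : Filter.Tendsto (fun n : ℕ => (4 * C + (3 / 4 : ℝ) ^ n *
      (∑ s ∈ E, ∑ t ∈ F, ‖φ (s * t)‖)) * (√(∑ s ∈ E, ‖α s‖ ^ 2) * √(∑ t ∈ F, ‖β t‖ ^ 2)))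
      Filter.atTop (nhds ((4 * C + 0 * (∑ s ∈ E, ∑ t ∈ F, ‖φ (s * t)‖)) *
        (√(∑ s ∈ E, ‖α s‖ ^ 2) * √(∑ t ∈ F, ‖β t‖ ^ 2)))) := by
    refine Filter.Tendsto.mul_const _ (Filter.Tendsto.const_add _ (Filter.Tendsto.mul_const _ ?_))
    exact tendsto_pow_atTop_nhds_zero_of_lt_one (by norm_num) (by norm_num)
  refine (ge_of_tendsto' h2 fun n => h1 n h hr hc α β).trans ?_
  gcongr
  linarith

/-- a kernel with bounded finite blocks comes from an operator -/
lemma aux_build {G : Type*} [DecidableEq G] (k : G → G → ℂ) (M : ℝ) (hM : 0 ≤ M)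
    (hk : ∀ (E F : Finset G) (α β : G → ℂ), ‖∑ s ∈ E, ∑ t ∈ F, k s t * α s * β t‖ ≤
      M * (√(∑ s ∈ E, ‖α s‖ ^ 2) * √(∑ t ∈ F, ‖β t‖ ^ 2))) :
    ∃ B : lp (fun _ : G => ℂ) 2 →L[ℂ] lp (fun _ : G => ℂ) 2,
      (∀ s t, ⟪(lp.single 2 t 1 : lp (fun _ : G => ℂ) 2), B (lp.single 2 s 1)⟫_ℂ = k s t) ∧
      ‖B‖ ≤ M := by
  have hsq : ∀ z : ℂ, ((‖z‖ ^ 2 : ℝ) : ℂ) = z * conj z := fun z => by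
    rw [Complex.mul_conj, Complex.normSq_eq_norm_sq]
  have fin : ∀ (x : ℝ) (y : ℝ), 0 ≤ x → 0 ≤ y → x ≤ y * √x → x ≤ y ^ 2 := by
    intro x y hx hy hxy
    have h1 := Real.sq_sqrt hx
    have h2 := Real.sqrt_nonneg x
    have h3 : √x ≤ y := by
      by_contra hh
      push Not at hh
      nlinarith
    nlinarith
  have hrow : ∀ t (E : Finset G), ∑ s ∈ E, ‖conj (k s t)‖ ^ 2 ≤ M ^ 2 := by
    intro t E
    have h1 := hk E {t} (fun s => conj (k s t)) (fun _ => 1)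
    simp only [Finset.sum_singleton, mul_one, ← hsq, norm_one, one_pow, Real.sqrt_one] at h1
    rw [← Complex.ofReal_sum, Complex.norm_real, Real.norm_of_nonneg (by positivity)] at h1
    simp only [RCLike.norm_conj] at h1 ⊢
    exact fin _ _ (by positivity) hM h1
  have hmem : ∀ t, Memℓp (fun s => conj (k s t)) 2 := by
    intro t
    refine memℓp_gen' (C := M ^ 2) fun E => ?_
    simpa using hrow t E
  let R : G → lp (fun _ : G => ℂ) 2 := fun t => ⟨fun s => conj (k s t), hmem t⟩
  have hR : ∀ t (v : lp (fun _ : G => ℂ) 2), HasSum (fun s => k s t * v s) ⟪R t, v⟫_ℂ := by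
    intro t v
    have := lp.hasSum_inner (𝕜 := ℂ) (R t) v
    have h9 : (fun s => k s t * v s) = fun s => ⟪R t s, v s⟫_ℂ := by
      funext s
      simp [R, mul_comm]
    rw [h9]
    exact this
  have hnv : ∀ (v : lp (fun _ : G => ℂ) 2) (E : Finset G), √(∑ s ∈ E, ‖v s‖ ^ 2) ≤ ‖v‖ := by
    intro v E
    refine Real.sqrt_le_iff.2 ⟨norm_nonneg _, ?_⟩
    have := lp.sum_rpow_le_norm_rpow (p := 2) (by norm_num) v E
    simpa using this
  have hB : ∀ (v : lp (fun _ : G => ℂ) 2) (F : Finset G),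
      ∑ t ∈ F, ‖⟪R t, v⟫_ℂ‖ ^ 2 ≤ (M * ‖v‖) ^ 2 := by
    intro v F
    have h1 : Filter.Tendsto (fun E : Finset G => ∑ t ∈ F, ‖∑ s ∈ E, k s t * v s‖ ^ 2)
        Filter.atTop (nhds (∑ t ∈ F, ‖⟪R t, v⟫_ℂ‖ ^ 2)) :=
      tendsto_finsetSum _ fun t _ => ((hR t v).norm).pow 2
    refine le_of_tendsto' h1 fun E => ?_
    have h2 := hk E F (fun s => v s) (fun t => conj (∑ s ∈ E, k s t * v s))
    rw [Finset.sum_comm] at h2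
    simp_rw [← Finset.sum_mul, ← hsq] at h2
    rw [← Complex.ofReal_sum, Complex.norm_real, Real.norm_of_nonneg (by positivity)] at h2
    simp only [RCLike.norm_conj] at h2
    refine fin _ _ (by positivity) (by positivity) (h2.trans ?_)
    rw [← mul_assoc]
    gcongr
    exact hnv v E
  have hBm : ∀ v : lp (fun _ : G => ℂ) 2, Memℓp (fun t => ⟪R t, v⟫_ℂ) 2 := by
    intro v
    refine memℓp_gen' (C := (M * ‖v‖) ^ 2) fun E => ?_
    simpa using hB v E
  let L : lp (fun _ : G => ℂ) 2 →ₗ[ℂ] lp (fun _ : G => ℂ) 2 :=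
    { toFun := fun v => ⟨fun t => ⟪R t, v⟫_ℂ, hBm v⟩
      map_add' := fun v w => by
        ext t; exact inner_add_right _ _ _
      map_smul' := fun c v => by
        ext t; exact inner_smul_right _ _ _ }
  have hL : ∀ v, ‖L v‖ ≤ M * ‖v‖ := by
    intro v
    refine lp.norm_le_of_forall_sum_le (p := 2) (by norm_num) (by positivity) fun F => ?_
    have := hB v F
    simp only [ENNReal.toReal_ofNat, Real.rpow_ofNat]
    exact this
  refine ⟨L.mkContinuous M hL, ?_, LinearMap.mkContinuous_norm_le _ hM _⟩
  intro s t
  rw [lp.inner_single_left]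
  change ⟪(1 : ℂ), ⟪R t, lp.single 2 s 1⟫_ℂ⟫_ℂ = _
  rw [lp.inner_single_right]
  simp [R]

end aux

/-- Corollary 0.3: if for every `ε : G → ℂ` with `|ε| ≤ 1` the kernel
`(s,t) ↦ ε(st)·φ(st)` is a Schur multiplier of norm at most `C`, then for every
`ξ : G × G → ℂ` with `|ξ| ≤ 1` the kernel `(s,t) ↦ ξ(s,t)·φ(st)` is a Schur multiplier of
norm at most `8C`. -/
theorem stmt_14 {G : Type*} [Group G] (φ : G → ℂ) (C : ℝ) (hC : 0 ≤ C)
    (h : ∀ ε : G → ℂ, (∀ x, ‖ε x‖ ≤ 1) →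
      IsSchurMultiplier (fun p : G × G => ε (p.1 * p.2) * φ (p.1 * p.2)) C) :
    ∀ ξ : G × G → ℂ, (∀ p, ‖ξ p‖ ≤ 1) →
      IsSchurMultiplier (fun p : G × G => ξ p * φ (p.1 * p.2)) (8 * C) := by
  intro ξ hξ
  letI := Classical.decEq G
  intro A
  let e : G → lp (fun _ : G => ℂ) 2 := fun s => lp.single 2 s 1
  have he : Orthonormal ℂ e := by
    rw [orthonormal_iff_ite]
    intro i j
    simp only [e]
    rw [lp.inner_single_left, lp.single_apply]
    by_cases hij : i = j
    · subst hij; simp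
    · simp [hij]
  rcases eq_or_ne A 0 with rfl | hA
  · exact ⟨0, by simp, by simp⟩
  have hA0 : 0 < ‖A‖ := norm_pos_iff.2 hA
  have core := aux_core e he φ C hC (fun ε hε A => h ε hε A)
  have hAA : ∀ v, ‖A v‖ ^ 2 ≤ ‖A‖ ^ 2 * ‖v‖ ^ 2 := fun v => by
    rw [← mul_pow]; exact pow_le_pow_left₀ (norm_nonneg _) (A.le_opNorm v) 2
  have hAd : ∀ v, ‖(adjoint A) v‖ ^ 2 ≤ ‖A‖ ^ 2 * ‖v‖ ^ 2 := fun v => by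
    rw [← mul_pow]
    refine pow_le_pow_left₀ (norm_nonneg _) (((adjoint A).le_opNorm v).trans (le_of_eq ?_)) 2
    rw [LinearIsometryEquiv.norm_map]
  have hen : ∀ s, ‖e s‖ = 1 := he.1
  let k : G → G → ℂ := fun s t => ξ (s, t) * inner ℂ (e t) (A (e s)) * (‖A‖ : ℂ)⁻¹
  have hk : ∀ s t, ‖k s t‖ ^ 2 ≤ ‖inner ℂ (e t) (A (e s))‖ ^ 2 * (‖A‖ ^ 2)⁻¹ := by
    intro s t
    simp only [k]
    rw [norm_mul, norm_mul, norm_inv, Complex.norm_real, norm_norm, mul_pow, mul_pow, inv_pow]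
    gcongr
    exact mul_le_of_le_one_left (by positivity) (pow_le_one₀ (norm_nonneg _) (hξ _))
  have hr : ∀ (E F : Finset G), ∀ s ∈ E, ∑ t ∈ F, ‖k s t‖ ^ 2 ≤ 1 := by
    intro E F s _
    refine (Finset.sum_le_sum fun t _ => hk s t).trans ?_
    rw [← Finset.sum_mul, ← div_eq_mul_inv, div_le_one (by positivity)]
    refine (he.sum_inner_products_le _).trans ((hAA _).trans ?_)
    rw [hen]; simp
  have hc : ∀ (E F : Finset G), ∀ t ∈ F, ∑ s ∈ E, ‖k s t‖ ^ 2 ≤ 1 := by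
    intro E F t _
    refine (Finset.sum_le_sum fun s _ => hk s t).trans ?_
    rw [← Finset.sum_mul, ← div_eq_mul_inv, div_le_one (by positivity)]
    have h1 : ∀ s, ‖inner ℂ (e t) (A (e s))‖ = ‖inner ℂ (e s) ((adjoint A) (e t))‖ := fun s => by
      rw [adjoint_inner_right, norm_inner_symm]
    simp_rw [h1]
    refine (he.sum_inner_products_le _).trans ((hAd _).trans ?_)
    rw [hen]; simp
  obtain ⟨B, hB1, hB2⟩ := aux_build (fun s t => ξ (s, t) * φ (s * t) * inner ℂ (e t) (A (e s)))
    (8 * C * ‖A‖) (by positivity) (by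
      intro E F α β
      have h1 := core E F k (hr E F) (hc E F) α β
      have h2 : ∑ s ∈ E, ∑ t ∈ F, ξ (s, t) * φ (s * t) * inner ℂ (e t) (A (e s)) * α s * β t =
          (‖A‖ : ℂ) * ∑ s ∈ E, ∑ t ∈ F, φ (s * t) * k s t * α s * β t := by
        simp_rw [Finset.mul_sum]
        refine Finset.sum_congr rfl fun s _ => Finset.sum_congr rfl fun t _ => ?_
        have hAc : (‖A‖ : ℂ) ≠ 0 := by exact_mod_cast hA0.ne'
        simp only [k]
        field_simp
      rw [h2, norm_mul, Complex.norm_real, norm_norm]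
      calc _ ≤ ‖A‖ * _ := mul_le_mul_of_nonneg_left h1 hA0.le
        _ = _ := by ring)
  exact ⟨B, hB1, hB2⟩
end
end

section
/- Let S, T, X be sets and p : S × T → X a map for which there is m ∈ ℕ with |{s ∈ S : p(s,t₀) = x}| ≤ m and |{t ∈ T : p(s₀,t) = x}| ≤ m for all s₀ ∈ S, t₀ ∈ T, x ∈ X. Let φ : X → ℂ and suppose there is a constant C such that for every ε : X → ℂ with |ε(x)| ≤ 1 for all x ∈ X, the kernel (s,t) ↦ ε(p(s,t))·φ(p(s,t)) is a Schur multiplier of norm at most C. Then there is a constant C′ (depending only on C and m) such that for every ξ : S × T → ℂ with |ξ(s,t)| ≤ 1 for all (s,t), the kernel (s,t) ↦ ξ(s,t)·φ(p(s,t)) is a Schur multiplier of norm at most C′. -/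
open scoped ENNReal NNReal
open MeasureTheory ContinuousLinearMap

noncomputable section

lemma aux_coer {H K : Type*} [NormedAddCommGroup H] [InnerProductSpace ℂ H] [CompleteSpace H]
    [NormedAddCommGroup K] [InnerProductSpace ℂ K] [CompleteSpace K]
    (F : H →L[ℂ] K) (d : ℝ) (hd : 0 < d) (u : H) :
    4 * d * ‖F u‖ ^ 2 ≤ ‖u + (d : ℂ) • (adjoint F) (F u)‖ ^ 2 ∧
      ‖u‖ ^ 2 ≤ ‖u + (d : ℂ) • (adjoint F) (F u)‖ ^ 2 := by
  have h1 : RCLike.re (inner ℂ u ((d : ℂ) • (adjoint F) (F u))) = d * ‖F u‖ ^ 2 := by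
    rw [inner_smul_right, adjoint_inner_right, inner_self_eq_norm_sq_to_K]
    have : ((d : ℂ) * (((‖F u‖ : ℝ) : ℂ)) ^ 2) = ((d * ‖F u‖ ^ 2 : ℝ) : ℂ) := by push_cast; rfl
    exact (congrArg Complex.re this).trans (Complex.ofReal_re _)
  have h2 := @norm_add_sq ℂ H _ _ _ u ((d : ℂ) • (adjoint F) (F u))
  rw [h1] at h2
  have h3 : d * ‖F u‖ ^ 2 ≤ ‖u‖ * ‖(d : ℂ) • (adjoint F) (F u)‖ := by
    rw [← h1]
    exact re_inner_le_norm _ _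
  have h4 : 0 ≤ d * ‖F u‖ ^ 2 := by positivity
  constructor
  · nlinarith [sq_nonneg (‖u‖ - ‖(d : ℂ) • (adjoint F) (F u)‖)]
  · nlinarith [sq_nonneg (‖(d : ℂ) • (adjoint F) (F u)‖)]

lemma aux_inv {H K : Type*} [NormedAddCommGroup H] [InnerProductSpace ℂ H] [FiniteDimensional ℂ H]
    [NormedAddCommGroup K] [InnerProductSpace ℂ K] [FiniteDimensional ℂ K] [CompleteSpace H]
    [CompleteSpace K]
    (F : H →L[ℂ] K) (d : ℝ) (hd : 0 < d) :
    ∃ R : H →L[ℂ] H, ∀ v, R v + (d : ℂ) • (adjoint F) (F (R v)) = v := by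
  let L : H →ₗ[ℂ] H := LinearMap.id + (d : ℂ) • ((adjoint F).comp F).toLinearMap
  have hL : ∀ u, L u = u + (d : ℂ) • (adjoint F) (F u) := fun u => rfl
  have hinj : Function.Injective L := by
    rw [injective_iff_map_eq_zero]
    intro u hu
    have := (aux_coer F d hd u).2
    rw [← hL, hu] at this
    simp at this
    exact this
  let e := LinearEquiv.ofInjectiveEndo L hinj
  refine ⟨LinearMap.toContinuousLinearMap e.symm.toLinearMap, fun v => ?_⟩
  have : L (e.symm v) = v := e.apply_symm_apply v
  rw [hL] at this
  exact this

lemma aux_key {H K : Type*} [NormedAddCommGroup H] [InnerProductSpace ℂ H]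
      [CompleteSpace H] [NormedAddCommGroup K] [InnerProductSpace ℂ K] [CompleteSpace K]
      (d : ℝ) (hd : 0 < d) (F : H →L[ℂ] K) (R : H →L[ℂ] H)
      (hR : ∀ v, R v + (d : ℂ) • (adjoint F) (F (R v)) = v) (v : H) :
      4 * ‖F v - F (R v)‖ ^ 2 ≤ d * ‖(adjoint F) (F v)‖ ^ 2 := by
  have h0 : F v = F (R v) + (d : ℂ) • F ((adjoint F) (F (R v))) := by
    rw [← map_smul, ← map_add, hR]
  have h1 : F v - F (R v) = (d : ℂ) • F ((adjoint F) (F (R v))) := by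
    rw [h0, add_sub_cancel_left]
  have h2 : (adjoint F) (F v) = (adjoint F) (F (R v)) +
      (d : ℂ) • (adjoint F) (F ((adjoint F) (F (R v)))) := by
    rw [h0, map_add, map_smul]
  have h3 := (aux_coer F d hd ((adjoint F) (F (R v)))).1
  rw [h1, h2, norm_smul]
  have : ‖(d : ℂ)‖ = d := by simp [abs_of_pos hd]
  rw [this]
  nlinarith

lemma aux_res {H K : Type*} [NormedAddCommGroup H] [InnerProductSpace ℂ H] [FiniteDimensional ℂ H]
    [NormedAddCommGroup K] [InnerProductSpace ℂ K] [FiniteDimensional ℂ K] [CompleteSpace H]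
    [CompleteSpace K]
    (F : H →L[ℂ] K) (d : ℝ) (hd : 0 < d) :
    ∃ G : H →L[ℂ] K, (∀ v, 4 * d * ‖G v‖ ^ 2 ≤ ‖v‖ ^ 2) ∧
      (∀ v, 4 * ‖F v - G v‖ ^ 2 ≤ d * ‖(adjoint F) (F v)‖ ^ 2) ∧
      (∀ w, 4 * ‖adjoint F w - adjoint G w‖ ^ 2 ≤ d * ‖F (adjoint F w)‖ ^ 2) := by
  obtain ⟨R, hR⟩ := aux_inv F d hd
  obtain ⟨Q, hQ⟩ := aux_inv (adjoint F) d hd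
  simp only [adjoint_adjoint] at hQ
  refine ⟨F.comp R, ?_, ?_, ?_⟩
  · intro v
    have := (aux_coer F d hd (R v)).1
    rwa [hR] at this
  · intro v
    exact aux_key d hd F R hR v
  · intro w
    have h0 : adjoint (F.comp R) w = adjoint F (Q w) := by
      apply ext_inner_right ℂ
      intro v
      rw [adjoint_inner_left, adjoint_inner_left]
      simp only [coe_comp, Function.comp_apply]
      conv_lhs => rw [← hQ w]
      conv_rhs => rw [← hR v]
      rw [inner_add_left, map_add, inner_add_right, inner_smul_left, map_smul, inner_smul_right,
        Complex.conj_ofReal, ← adjoint_inner_right F (adjoint F (Q w)), adjoint_inner_left]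
    rw [h0]
    have := aux_key d hd (adjoint F) Q (by simpa only [adjoint_adjoint] using hQ) w
    simpa using this

lemma aux_coord {S T : Type*} [Fintype S] [Fintype T] [DecidableEq S] [DecidableEq T]
    (f : S → T → ℂ) (r : ℝ) (hr : 0 < r) :
    ∃ D : EuclideanSpace ℂ S →L[ℂ] EuclideanSpace ℂ T, ‖D‖ ≤ r / 2 ∧
      (∀ s, ∑ t, ‖f s t - D (EuclideanSpace.single s 1) t‖ ^ 2 ≤
        1 / (4 * r ^ 2) * ∑ s', ‖∑ t, f s t * (starRingEnd ℂ) (f s' t)‖ ^ 2) ∧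
      (∀ t, ∑ s, ‖f s t - D (EuclideanSpace.single s 1) t‖ ^ 2 ≤
        1 / (4 * r ^ 2) * ∑ t', ‖∑ s, f s t * (starRingEnd ℂ) (f s t')‖ ^ 2) := by
  let F : EuclideanSpace ℂ S →L[ℂ] EuclideanSpace ℂ T :=
    LinearMap.toContinuousLinearMap
      (Matrix.toEuclideanLin (Matrix.of (fun t s => f s t)))
  have hF : ∀ s t, F (EuclideanSpace.single s 1) t = f s t := by
    intro s t
    simp [F, Matrix.toLpLin_apply, Matrix.mulVec_single]
  obtain ⟨G, h1, h2, h3⟩ := aux_res F (1 / r ^ 2) (by positivity)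
  have adj : ∀ (A : EuclideanSpace ℂ S →L[ℂ] EuclideanSpace ℂ T) s t,
      adjoint A (EuclideanSpace.single t 1) s =
        (starRingEnd ℂ) (A (EuclideanSpace.single s 1) t) := by
    intro A s t
    have := adjoint_inner_right A (EuclideanSpace.single s (1 : ℂ)) (EuclideanSpace.single t (1 : ℂ))
    simpa [EuclideanSpace.inner_single_left, EuclideanSpace.inner_single_right] using this
  refine ⟨G, ?_, ?_, ?_⟩
  · apply opNorm_le_bound _ (by positivity)
    intro v
    apply le_of_sq_le_sq _ (by positivity)
    have := h1 v
    field_simp at this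
    rw [mul_pow, div_pow]
    linarith
  · intro s
    have h := h2 (EuclideanSpace.single s 1)
    rw [EuclideanSpace.norm_sq_eq, EuclideanSpace.norm_sq_eq] at h
    have e : ∀ s', ‖(adjoint F) (F (EuclideanSpace.single s 1)) s'‖
        = ‖∑ t, f s t * (starRingEnd ℂ) (f s' t)‖ := by
      intro s'
      congr 1
      have := adjoint_inner_right F (EuclideanSpace.single s' (1 : ℂ)) (F (EuclideanSpace.single s 1))
      rw [EuclideanSpace.inner_single_left, PiLp.inner_apply] at this
      simpa [hF] using this
    simp only [e] at h
    simp only [PiLp.sub_apply, hF] at h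
    have e2 : 1 / (4 * r ^ 2) = (1 / r ^ 2) / 4 := by field_simp
    rw [e2]
    linarith
  · intro t
    have h := h3 (EuclideanSpace.single t 1)
    rw [EuclideanSpace.norm_sq_eq, EuclideanSpace.norm_sq_eq] at h
    have e : ∀ t', ‖F ((adjoint F) (EuclideanSpace.single t 1)) t'‖
        = ‖∑ s, f s t * (starRingEnd ℂ) (f s t')‖ := by
      intro t'
      rw [← Complex.norm_conj (∑ s, f s t * (starRingEnd ℂ) (f s t'))]
      congr 1
      have := adjoint_inner_left F ((adjoint F) (EuclideanSpace.single t 1)) (EuclideanSpace.single t' (1 : ℂ))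
      rw [EuclideanSpace.inner_single_left, PiLp.inner_apply] at this
      simp [hF, adj] at this ⊢
      rw [← this]
    simp only [e] at h
    simp only [PiLp.sub_apply, adj, hF, ← map_sub, Complex.norm_conj] at h
    have e2 : 1 / (4 * r ^ 2) = (1 / r ^ 2) / 4 := by field_simp
    rw [e2]
    linarith

def sgn {X : Type*} (w : X → ℤˣ) (x : X) : ℂ := ((w x : ℤ) : ℂ)

lemma sgn_mul_self {X : Type*} (w : X → ℤˣ) (x : X) : sgn w x * sgn w x = 1 := by
  unfold sgn
  rcases Int.units_eq_one_or (w x) with h | h <;> simp [h]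

lemma sgn_norm {X : Type*} (w : X → ℤˣ) (x : X) : ‖sgn w x‖ = 1 := by
  unfold sgn
  rcases Int.units_eq_one_or (w x) with h | h <;> simp [h]

lemma sgn_conj {X : Type*} (w : X → ℤˣ) (x : X) : (starRingEnd ℂ) (sgn w x) = sgn w x := by
  unfold sgn
  rcases Int.units_eq_one_or (w x) with h | h <;> simp [h]

lemma alone {X : Type*} (a b c d : X)
    (h : ¬ ((a = b ∧ c = d) ∨ (a = c ∧ b = d) ∨ (a = d ∧ b = c))) :
    (b ≠ a ∧ c ≠ a ∧ d ≠ a) ∨ (a ≠ b ∧ c ≠ b ∧ d ≠ b) ∨ (a ≠ c ∧ b ≠ c ∧ d ≠ c) ∨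
        (a ≠ d ∧ b ≠ d ∧ c ≠ d) := by
  grind

lemma sgn4_zero {X : Type*} [Fintype X] [DecidableEq X] (a b c d : X)
    (h : ¬ ((a = b ∧ c = d) ∨ (a = c ∧ b = d) ∨ (a = d ∧ b = c))) :
    ∑ w : X → ℤˣ, sgn w a * sgn w b * sgn w c * sgn w d = 0 := by
  have flip : ∀ x : X, ((∀ w : X → ℤˣ, sgn (Function.update (1 : X → ℤˣ) x (-1) * w) a *
      sgn (Function.update (1 : X → ℤˣ) x (-1) * w) b * sgn (Function.update (1 : X → ℤˣ) x (-1) * w) c *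
      sgn (Function.update (1 : X → ℤˣ) x (-1) * w) d = - (sgn w a * sgn w b * sgn w c * sgn w d))) →
      ∑ w : X → ℤˣ, sgn w a * sgn w b * sgn w c * sgn w d = 0 := by
    intro x hx
    have h1 := Equiv.sum_comp (Equiv.mulLeft (Function.update (1 : X → ℤˣ) x (-1)))
      (fun w : X → ℤˣ => sgn w a * sgn w b * sgn w c * sgn w d)
    simp only [Equiv.coe_mulLeft, hx, Finset.sum_neg_distrib] at h1
    linear_combination (-1 / 2 : ℂ) * h1
  have ev : ∀ (x y : X) (w : X → ℤˣ), sgn (Function.update (1 : X → ℤˣ) x (-1) * w) y =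
      if y = x then - sgn w y else sgn w y := by
    intro x y w
    unfold sgn
    by_cases hxy : y = x
    · subst hxy; simp
    · simp [hxy]
  have : ∃ x, ∀ w : X → ℤˣ, sgn (Function.update (1 : X → ℤˣ) x (-1) * w) a *
      sgn (Function.update (1 : X → ℤˣ) x (-1) * w) b * sgn (Function.update (1 : X → ℤˣ) x (-1) * w) c *
      sgn (Function.update (1 : X → ℤˣ) x (-1) * w) d = - (sgn w a * sgn w b * sgn w c * sgn w d) := by
    simp only [ev]
    have h' : (b ≠ a ∧ c ≠ a ∧ d ≠ a) ∨ (a ≠ b ∧ c ≠ b ∧ d ≠ b) ∨ (a ≠ c ∧ b ≠ c ∧ d ≠ c) ∨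
        (a ≠ d ∧ b ≠ d ∧ c ≠ d) := by
      exact alone a b c d h
    rcases h' with h | h | h | h
    · exact ⟨a, fun w => by rw [if_pos rfl, if_neg h.1, if_neg h.2.1, if_neg h.2.2]; ring⟩
    · exact ⟨b, fun w => by rw [if_pos rfl, if_neg h.1, if_neg h.2.1, if_neg h.2.2]; ring⟩
    · exact ⟨c, fun w => by rw [if_pos rfl, if_neg h.1, if_neg h.2.1, if_neg h.2.2]; ring⟩
    · exact ⟨d, fun w => by rw [if_pos rfl, if_neg h.1, if_neg h.2.1, if_neg h.2.2]; ring⟩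
  obtain ⟨x, hx⟩ := this
  exact flip x hx

lemma sgn4_le {X : Type*} [Fintype X] [DecidableEq X] (a b c d : X) :
    ‖∑ w : X → ℤˣ, sgn w a * sgn w b * sgn w c * sgn w d‖ ≤
      (Fintype.card (X → ℤˣ) : ℝ) * ((if a = b ∧ c = d then 1 else 0) +
        (if a = c ∧ b = d then 1 else 0) + (if a = d ∧ b = c then 1 else 0)) := by
  by_cases h : ((a = b ∧ c = d) ∨ (a = c ∧ b = d) ∨ (a = d ∧ b = c))
  · have h1 : ‖∑ w : X → ℤˣ, sgn w a * sgn w b * sgn w c * sgn w d‖ ≤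
      (Fintype.card (X → ℤˣ) : ℝ) := by
      refine (norm_sum_le _ _).trans ?_
      simp [sgn_norm]
    refine h1.trans (le_mul_of_one_le_right (by positivity) ?_)
    rcases h with h | h | h
    · rw [if_pos h]; split_ifs <;> norm_num
    · rw [if_pos h]; split_ifs <;> norm_num
    · rw [if_pos h]; split_ifs <;> norm_num
  · rw [sgn4_zero a b c d h, norm_zero]
    positivity

/-- first counting lemma -/
lemma cnt1 {S T X : Type*} [Fintype S] [Fintype T] [DecidableEq X] (p : S → T → X) (m : ℕ)
    (hp : ∀ t x, (Finset.univ.filter (fun s => p s t = x)).card ≤ m)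
    (v : S → T → ℝ) (hv : ∀ s t, 0 ≤ v s t) (hr : ∀ s, ∑ t, v s t ≤ 1) (s : S) :
    ∑ s', ∑ t, ∑ t', v s t * v s' t' * (if p s' t = p s t then 1 else 0) ≤ (m : ℝ) := by
  rw [Finset.sum_comm]
  calc ∑ t, ∑ s', ∑ t', v s t * v s' t' * (if p s' t = p s t then 1 else 0)
      = ∑ t, v s t * ∑ s', (if p s' t = p s t then 1 else 0) * ∑ t', v s' t' := by
        refine Finset.sum_congr rfl fun t _ => ?_
        rw [Finset.mul_sum]
        refine Finset.sum_congr rfl fun s' _ => ?_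
        rw [Finset.mul_sum, Finset.mul_sum]
        refine Finset.sum_congr rfl fun t' _ => ?_
        ring
    _ ≤ ∑ t, v s t * m := by
        refine Finset.sum_le_sum fun t _ => mul_le_mul_of_nonneg_left ?_ (hv s t)
        calc ∑ s', (if p s' t = p s t then (1 : ℝ) else 0) * ∑ t', v s' t'
            ≤ ∑ s', (if p s' t = p s t then (1 : ℝ) else 0) := by
              refine Finset.sum_le_sum fun s' _ => mul_le_of_le_one_right (by positivity) (hr s')
          _ ≤ m := by
              rw [Finset.sum_boole]
              exact_mod_cast hp t (p s t)
    _ ≤ m := by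
        rw [← Finset.sum_mul]
        exact mul_le_of_le_one_left (by positivity) (hr s)

lemma cnt2 {S T : Type*} [Fintype S] [Fintype T] (Q : S → T → T → Prop)
    [∀ s t t', Decidable (Q s t t')] (m : ℕ)
    (hQ : ∀ s t, (Finset.univ.filter (fun t' => Q s t t')).card ≤ m)
    (v : S → T → ℝ) (hv : ∀ s t, 0 ≤ v s t) (hr : ∀ s, ∑ t, v s t ≤ 1)
    (hc : ∀ t, ∑ s, v s t ≤ 1) (s : S) :
    ∑ s', ∑ t, ∑ t', v s t * v s' t * (if Q s' t t' then 1 else 0) ≤ (m : ℝ) := by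
  rw [Finset.sum_comm]
  calc ∑ t, ∑ s', ∑ t', v s t * v s' t * (if Q s' t t' then 1 else 0)
      ≤ ∑ t, ∑ s', v s t * v s' t * m := by
        refine Finset.sum_le_sum fun t _ => Finset.sum_le_sum fun s' _ => ?_
        rw [← Finset.mul_sum]
        refine mul_le_mul_of_nonneg_left ?_ (mul_nonneg (hv _ _) (hv _ _))
        rw [Finset.sum_boole]
        exact_mod_cast hQ s' t
    _ = ∑ t, v s t * (∑ s', v s' t) * m := by
        refine Finset.sum_congr rfl fun t _ => ?_
        rw [Finset.mul_sum, Finset.sum_mul]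
    _ ≤ ∑ t, v s t * m := by
        refine Finset.sum_le_sum fun t _ => mul_le_mul_of_nonneg_right ?_ (by positivity)
        exact mul_le_of_le_one_right (hv _ _) (hc t)
    _ ≤ m := by
        rw [← Finset.sum_mul]
        exact mul_le_of_le_one_left (by positivity) (hr s)

lemma quad_le {S T X : Type*} [Fintype S] [Fintype T] [DecidableEq X] (p : S → T → X) (m : ℕ)
    (hp : ∀ t x, (Finset.univ.filter (fun s => p s t = x)).card ≤ m)
    (hp' : ∀ s x, (Finset.univ.filter (fun t => p s t = x)).card ≤ m)
    (w : S → T → ℝ) (hw : ∀ s t, 0 ≤ w s t) (hr : ∀ s, ∑ t, w s t ^ 2 ≤ 1)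
    (hc : ∀ t, ∑ s, w s t ^ 2 ≤ 1) (s : S) :
    ∑ s', ∑ t, ∑ t', w s t * w s' t * w s t' * w s' t' *
      ((if p s t = p s' t ∧ p s t' = p s' t' then 1 else 0) +
        (if p s t = p s t' ∧ p s' t = p s' t' then 1 else 0) +
        (if p s t = p s' t' ∧ p s' t = p s t' then 1 else 0)) ≤ 3 * (m : ℝ) := by
  have A1 := cnt1 p m hp (fun s t => w s t ^ 2) (fun _ _ => sq_nonneg _) hr s
  have B1 := cnt2 (fun s' t t' => p s t' = p s t) m (fun _ t => hp' s _)
    (fun s t => w s t ^ 2) (fun _ _ => sq_nonneg _) hr hc s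
  have C1 := cnt2 (fun s' t t' => p s' t' = p s t) m (fun s' t => hp' s' _)
    (fun s t => w s t ^ 2) (fun _ _ => sq_nonneg _) hr hc s
  have C2 := cnt2 (fun s' t t' => p s t' = p s' t) m (fun s' t => hp' s _)
    (fun s t => w s t ^ 2) (fun _ _ => sq_nonneg _) hr hc s
  have A2 := A1
  have B2 := B1
  have sw : ∀ g : S → T → T → ℝ, ∑ s', ∑ t, ∑ t', g s' t t' = ∑ s', ∑ t, ∑ t', g s' t' t :=
    fun g => Finset.sum_congr rfl fun s' _ => Finset.sum_comm
  rw [sw] at A2 B2 C2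
  have key : ∀ s' t t', w s t * w s' t * w s t' * w s' t' *
      ((if p s t = p s' t ∧ p s t' = p s' t' then 1 else 0) +
        (if p s t = p s t' ∧ p s' t = p s' t' then 1 else 0) +
        (if p s t = p s' t' ∧ p s' t = p s t' then 1 else 0)) ≤ 
      (1 / 2 : ℝ) * (w s t ^ 2 * w s' t' ^ 2 * (if p s' t = p s t then 1 else 0) +
       w s t' ^ 2 * w s' t ^ 2 * (if p s' t' = p s t' then 1 else 0) +
       w s t ^ 2 * w s' t ^ 2 * (if p s t' = p s t then 1 else 0) +
       w s t' ^ 2 * w s' t' ^ 2 * (if p s t = p s t' then 1 else 0) +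
       w s t ^ 2 * w s' t ^ 2 * (if p s' t' = p s t then 1 else 0) +
       w s t' ^ 2 * w s' t' ^ 2 * (if p s t = p s' t' then 1 else 0)) := by
    intro s' t t'
    have h1 : w s t * w s' t * w s t' * w s' t' ≤ (1 / 2 : ℝ) * (w s t ^ 2 * w s' t' ^ 2 +
        w s t' ^ 2 * w s' t ^ 2) := by
      nlinarith [sq_nonneg (w s t * w s' t' - w s t' * w s' t)]
    have h2 : w s t * w s' t * w s t' * w s' t' ≤ (1 / 2 : ℝ) * (w s t ^ 2 * w s' t ^ 2 +
        w s t' ^ 2 * w s' t' ^ 2) := by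
      nlinarith [sq_nonneg (w s t * w s' t - w s t' * w s' t')]
    have a : w s t * w s' t * w s t' * w s' t' *
        (if p s t = p s' t ∧ p s t' = p s' t' then 1 else 0) ≤ (1 / 2 : ℝ) *
        (w s t ^ 2 * w s' t' ^ 2 * (if p s' t = p s t then 1 else 0) +
         w s t' ^ 2 * w s' t ^ 2 * (if p s' t' = p s t' then 1 else 0)) := by
      by_cases h : p s t = p s' t ∧ p s t' = p s' t'
      · rw [if_pos h, if_pos h.1.symm, if_pos h.2.symm]; linarith
      · rw [if_neg h, mul_zero]; positivity
    have b : w s t * w s' t * w s t' * w s' t' *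
        (if p s t = p s t' ∧ p s' t = p s' t' then 1 else 0) ≤ (1 / 2 : ℝ) *
       (w s t ^ 2 * w s' t ^ 2 * (if p s t' = p s t then 1 else 0) +
       w s t' ^ 2 * w s' t' ^ 2 * (if p s t = p s t' then 1 else 0)) := by
      by_cases h : p s t = p s t' ∧ p s' t = p s' t'
      · rw [if_pos h, if_pos h.1.symm, if_pos h.1]; linarith
      · rw [if_neg h, mul_zero]; positivity
    have c : w s t * w s' t * w s t' * w s' t' *
        (if p s t = p s' t' ∧ p s' t = p s t' then 1 else 0) ≤ (1 / 2 : ℝ) *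
       (w s t ^ 2 * w s' t ^ 2 * (if p s' t' = p s t then 1 else 0) +
       w s t' ^ 2 * w s' t' ^ 2 * (if p s t = p s' t' then 1 else 0)) := by
      by_cases h : p s t = p s' t' ∧ p s' t = p s t'
      · rw [if_pos h, if_pos h.1.symm, if_pos h.1]; linarith
      · rw [if_neg h, mul_zero]; positivity
    rw [mul_add, mul_add]
    linarith
  refine (Finset.sum_le_sum fun s' _ => Finset.sum_le_sum fun t _ =>
    Finset.sum_le_sum fun t' _ => key s' t t').trans ?_
  simp only [← Finset.mul_sum] at A1 A2 B1 B2 C1 C2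
  simp only [← Finset.mul_sum, Finset.sum_add_distrib]
  linarith

lemma fourth {S T X : Type*} [Fintype S] [Fintype T] [Fintype X] [DecidableEq X] (p : S → T → X)
    (m : ℕ)
    (hp : ∀ t x, (Finset.univ.filter (fun s => p s t = x)).card ≤ m)
    (hp' : ∀ s x, (Finset.univ.filter (fun t => p s t = x)).card ≤ m)
    (c : S → T → ℂ) (hr : ∀ s, ∑ t, ‖c s t‖ ^ 2 ≤ 1)
    (hc : ∀ t, ∑ s, ‖c s t‖ ^ 2 ≤ 1) (s : S) :
    ∑ w : X → ℤˣ, ∑ s', ‖∑ t, (sgn w (p s t) * c s t) *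
      (starRingEnd ℂ) (sgn w (p s' t) * c s' t)‖ ^ 2 ≤ (Fintype.card (X → ℤˣ) : ℝ) * (3 * m) := by
  have e : ((∑ w : X → ℤˣ, ∑ s', ‖∑ t, (sgn w (p s t) * c s t) *
      (starRingEnd ℂ) (sgn w (p s' t) * c s' t)‖ ^ 2 : ℝ) : ℂ) =
      ∑ s', ∑ t, ∑ t', (c s t * (starRingEnd ℂ) (c s' t) * (starRingEnd ℂ) (c s t') * c s' t') *
        ∑ w : X → ℤˣ, sgn w (p s t) * sgn w (p s' t) * sgn w (p s t') * sgn w (p s' t') := by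
    push_cast
    rw [Finset.sum_comm]
    refine Finset.sum_congr rfl fun s' _ => ?_
    have : ∀ w : X → ℤˣ, ((‖∑ t, (sgn w (p s t) * c s t) *
      (starRingEnd ℂ) (sgn w (p s' t) * c s' t)‖ : ℂ)) ^ 2 = ∑ t, ∑ t', 
       (c s t * (starRingEnd ℂ) (c s' t) * (starRingEnd ℂ) (c s t') * c s' t') *
        (sgn w (p s t) * sgn w (p s' t) * sgn w (p s t') * sgn w (p s' t')) := by
      intro w
      rw [← Complex.mul_conj', map_sum, Finset.sum_mul_sum]
      refine Finset.sum_congr rfl fun t _ => Finset.sum_congr rfl fun t' _ => ?_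
      simp only [map_mul, sgn_conj, Complex.conj_conj]
      ring
    simp only [this]
    rw [Finset.sum_comm]
    refine Finset.sum_congr rfl fun t _ => ?_
    rw [Finset.sum_comm]
    refine Finset.sum_congr rfl fun t' _ => ?_
    rw [Finset.mul_sum]
  have e1 : (∑ w : X → ℤˣ, ∑ s', ‖∑ t, (sgn w (p s t) * c s t) *
      (starRingEnd ℂ) (sgn w (p s' t) * c s' t)‖ ^ 2 : ℝ) =
     ‖((∑ w : X → ℤˣ, ∑ s', ‖∑ t, (sgn w (p s t) * c s t) *
      (starRingEnd ℂ) (sgn w (p s' t) * c s' t)‖ ^ 2 : ℝ) : ℂ)‖ := by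
    rw [Complex.norm_real, Real.norm_of_nonneg (by positivity)]
  rw [e1, e]
  refine le_trans ?_ (mul_le_mul_of_nonneg_left
    (quad_le p m hp hp' (fun s t => ‖c s t‖) (fun _ _ => norm_nonneg _) hr hc s) (by positivity))
  rw [Finset.mul_sum]
  refine (norm_sum_le _ _).trans (Finset.sum_le_sum fun s' _ => ?_)
  rw [Finset.mul_sum]
  refine (norm_sum_le _ _).trans (Finset.sum_le_sum fun t _ => ?_)
  rw [Finset.mul_sum]
  refine (norm_sum_le _ _).trans (Finset.sum_le_sum fun t' _ => ?_)
  rw [norm_mul]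
  refine (mul_le_mul_of_nonneg_left (sgn4_le _ _ _ _) (norm_nonneg _)).trans (le_of_eq ?_)
  simp only [norm_mul, Complex.norm_conj]
  ring

lemma fin_step {S T X : Type*} [Fintype S] [Fintype T] [DecidableEq S] [DecidableEq T]
    [Fintype X] [DecidableEq X] (p : S → T → X) (m : ℕ)
    (hp : ∀ t x, (Finset.univ.filter (fun s => p s t = x)).card ≤ m)
    (hp' : ∀ s x, (Finset.univ.filter (fun t => p s t = x)).card ≤ m)
    (a : S → T → ℂ) (C r : ℝ) (hC : 0 ≤ C) (hr0 : 0 < r) (hrm : 3 * (m : ℝ) ≤ r ^ 2)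
    (hyp : ∀ (w : X → ℤˣ) (D : EuclideanSpace ℂ S →L[ℂ] EuclideanSpace ℂ T),
      ‖∑ s, ∑ t, sgn w (p s t) * a s t * D (EuclideanSpace.single s 1) t‖ ≤ C * ‖D‖)
    (c : S → T → ℂ) (hr : ∀ s, ∑ t, ‖c s t‖ ^ 2 ≤ 1) (hc : ∀ t, ∑ s, ‖c s t‖ ^ 2 ≤ 1) :
    ∃ c' : S → T → ℂ, (∀ s, ∑ t, ‖c' s t‖ ^ 2 ≤ 1 / 4) ∧ (∀ t, ∑ s, ‖c' s t‖ ^ 2 ≤ 1 / 4) ∧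
      ‖∑ s, ∑ t, a s t * c s t‖ ≤ C * (r / 2) + ‖∑ s, ∑ t, a s t * c' s t‖ := by
  have hD := fun w : X → ℤˣ => aux_coord (fun s t => sgn w (p s t) * c s t) r hr0
  choose D hD1 hD2 hD3 using hD
  set N : ℝ := (Fintype.card (X → ℤˣ) : ℝ) with hN
  have hNpos : 0 < N := by
    rw [hN]
    exact_mod_cast Fintype.card_pos
  have hNC : (N : ℂ) ≠ 0 := by exact_mod_cast hNpos.ne'
  let R : (X → ℤˣ) → S → T → ℂ := fun w s t =>
    sgn w (p s t) * c s t - D w (EuclideanSpace.single s 1) t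
  let c' : S → T → ℂ := fun s t => (N : ℂ)⁻¹ * ∑ w : X → ℤˣ, sgn w (p s t) * R w s t
  have hc' : ∀ s t, ‖c' s t‖ ^ 2 ≤ N⁻¹ * ∑ w : X → ℤˣ, ‖R w s t‖ ^ 2 := by
    intro s t
    have h1 : ‖c' s t‖ ≤ N⁻¹ * ∑ w : X → ℤˣ, ‖R w s t‖ := by
      simp only [c']
      rw [norm_mul, norm_inv, Complex.norm_real, Real.norm_of_nonneg hNpos.le]
      refine mul_le_mul_of_nonneg_left ((norm_sum_le _ _).trans (le_of_eq ?_)) (by positivity)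
      simp [sgn_norm]
    have h2 : (∑ w : X → ℤˣ, ‖R w s t‖) ^ 2 ≤ N * ∑ w : X → ℤˣ, ‖R w s t‖ ^ 2 := by
      have := sq_sum_le_card_mul_sum_sq (s := (Finset.univ : Finset (X → ℤˣ)))
        (f := fun w => ‖R w s t‖)
      simpa [hN] using this
    calc ‖c' s t‖ ^ 2 ≤ (N⁻¹ * ∑ w : X → ℤˣ, ‖R w s t‖) ^ 2 := by gcongr
      _ = N⁻¹ ^ 2 * (∑ w : X → ℤˣ, ‖R w s t‖) ^ 2 := by ring
      _ ≤ N⁻¹ ^ 2 * (N * ∑ w : X → ℤˣ, ‖R w s t‖ ^ 2) := by gcongr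
      _ = N⁻¹ * ∑ w : X → ℤˣ, ‖R w s t‖ ^ 2 := by field_simp
  have fin : N⁻¹ * (1 / (4 * r ^ 2) * (N * (3 * m))) ≤ 1 / 4 := by
    have : N⁻¹ * (1 / (4 * r ^ 2) * (N * (3 * m))) = (3 * m) / (4 * r ^ 2) := by field_simp
    rw [this, div_le_div_iff₀ (by positivity) (by norm_num)]
    linarith
  refine ⟨c', ?_, ?_, ?_⟩
  · intro s
    calc ∑ t, ‖c' s t‖ ^ 2 ≤ ∑ t, N⁻¹ * ∑ w : X → ℤˣ, ‖R w s t‖ ^ 2 :=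
          Finset.sum_le_sum fun t _ => hc' s t
      _ = N⁻¹ * ∑ w : X → ℤˣ, ∑ t, ‖R w s t‖ ^ 2 := by
          rw [← Finset.mul_sum, Finset.sum_comm]
      _ ≤ N⁻¹ * ∑ w : X → ℤˣ, (1 / (4 * r ^ 2) * ∑ s', ‖∑ t, (sgn w (p s t) * c s t) *
      (starRingEnd ℂ) (sgn w (p s' t) * c s' t)‖ ^ 2) := by
          refine mul_le_mul_of_nonneg_left (Finset.sum_le_sum fun w _ => hD2 w s) (by positivity)
      _ ≤ N⁻¹ * (1 / (4 * r ^ 2) * (N * (3 * m))) := by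
          rw [← Finset.mul_sum]
          have := fourth p m hp hp' c hr hc s
          gcongr
      _ ≤ _ := fin
  · intro t
    calc ∑ s, ‖c' s t‖ ^ 2 ≤ ∑ s, N⁻¹ * ∑ w : X → ℤˣ, ‖R w s t‖ ^ 2 :=
          Finset.sum_le_sum fun s _ => hc' s t
      _ = N⁻¹ * ∑ w : X → ℤˣ, ∑ s, ‖R w s t‖ ^ 2 := by
          rw [← Finset.mul_sum, Finset.sum_comm]
      _ ≤ N⁻¹ * ∑ w : X → ℤˣ, (1 / (4 * r ^ 2) * ∑ t', ‖∑ s, (sgn w (p s t) * c s t) *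
      (starRingEnd ℂ) (sgn w (p s t') * c s t')‖ ^ 2) := by
          refine mul_le_mul_of_nonneg_left (Finset.sum_le_sum fun w _ => hD3 w t) (by positivity)
      _ ≤ N⁻¹ * (1 / (4 * r ^ 2) * (N * (3 * m))) := by
          rw [← Finset.mul_sum]
          have := fourth (fun t s => p s t) m hp' hp (fun t s => c s t) hc hr t
          gcongr
      _ ≤ _ := fin
  · have e : ∑ s, ∑ t, a s t * c s t = (N : ℂ)⁻¹ * ∑ w : X → ℤˣ, (∑ s, ∑ t, sgn w (p s t) * a s t *
        D w (EuclideanSpace.single s 1) t) + ∑ s, ∑ t, a s t * c' s t := by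
      have e1 : ∑ w : X → ℤˣ, (∑ s, ∑ t, sgn w (p s t) * a s t *
        D w (EuclideanSpace.single s 1) t) = ∑ s, ∑ t, ∑ w : X → ℤˣ, sgn w (p s t) * a s t *
        D w (EuclideanSpace.single s 1) t := by
        rw [Finset.sum_comm]
        exact Finset.sum_congr rfl fun s _ => Finset.sum_comm
      rw [e1, Finset.mul_sum, ← Finset.sum_add_distrib]
      refine Finset.sum_congr rfl fun s _ => ?_
      rw [Finset.mul_sum, ← Finset.sum_add_distrib]
      refine Finset.sum_congr rfl fun t _ => ?_
      simp only [c', R]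
      have e2 : ∑ w : X → ℤˣ, sgn w (p s t) * (sgn w (p s t) * c s t -
          D w (EuclideanSpace.single s 1) t) = N * c s t -
          ∑ w : X → ℤˣ, sgn w (p s t) * D w (EuclideanSpace.single s 1) t := by
        simp only [mul_sub, Finset.sum_sub_distrib, ← mul_assoc, sgn_mul_self, one_mul]
        simp [hN]
      have e3 : ∑ w : X → ℤˣ, sgn w (p s t) * a s t * D w (EuclideanSpace.single s 1) t =
          a s t * ∑ w : X → ℤˣ, sgn w (p s t) * D w (EuclideanSpace.single s 1) t := by
        rw [Finset.mul_sum]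
        exact Finset.sum_congr rfl fun w _ => by ring
      rw [e2, e3]
      field_simp
      ring
    rw [e]
    refine (norm_add_le _ _).trans (add_le_add ?_ le_rfl)
    rw [norm_mul, norm_inv, Complex.norm_real, Real.norm_of_nonneg hNpos.le]
    calc N⁻¹ * ‖∑ w : X → ℤˣ, (∑ s, ∑ t, sgn w (p s t) * a s t *
        D w (EuclideanSpace.single s 1) t)‖ ≤ N⁻¹ * ∑ w : X → ℤˣ, C * (r / 2) := by
          refine mul_le_mul_of_nonneg_left ?_ (by positivity)
          refine (norm_sum_le _ _).trans (Finset.sum_le_sum fun w _ => ?_)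
          exact (hyp w (D w)).trans (mul_le_mul_of_nonneg_left (hD1 w) hC)
      _ = C * (r / 2) := by
          rw [Finset.sum_const, nsmul_eq_mul, Finset.card_univ, ← hN]
          field_simp

lemma fin_main {S T X : Type*} [Fintype S] [Fintype T] [DecidableEq S] [DecidableEq T]
    [Fintype X] [DecidableEq X] (p : S → T → X) (m : ℕ)
    (hp : ∀ t x, (Finset.univ.filter (fun s => p s t = x)).card ≤ m)
    (hp' : ∀ s x, (Finset.univ.filter (fun t => p s t = x)).card ≤ m)
    (a : S → T → ℂ) (C r : ℝ) (hC : 0 ≤ C) (hr0 : 0 < r) (hrm : 3 * (m : ℝ) ≤ r ^ 2)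
    (hyp : ∀ (w : X → ℤˣ) (D : EuclideanSpace ℂ S →L[ℂ] EuclideanSpace ℂ T),
      ‖∑ s, ∑ t, sgn w (p s t) * a s t * D (EuclideanSpace.single s 1) t‖ ≤ C * ‖D‖)
    (q : ℝ) (hq : 0 < q)
    (c : S → T → ℂ) (hr : ∀ s, ∑ t, ‖c s t‖ ^ 2 ≤ q ^ 2) (hc : ∀ t, ∑ s, ‖c s t‖ ^ 2 ≤ q ^ 2) :
    ‖∑ s, ∑ t, a s t * c s t‖ ≤ C * r * q := by
  let Good : Set (S → T → ℂ) := {c | (∀ s, ∑ t, ‖c s t‖ ^ 2 ≤ 1) ∧ (∀ t, ∑ s, ‖c s t‖ ^ 2 ≤ 1)}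
  let V : Set ℝ := (fun c : S → T → ℂ => ‖∑ s, ∑ t, a s t * c s t‖) '' Good
  have hne : V.Nonempty := ⟨_, ⟨0, by simp [Good], rfl⟩⟩
  have hbdd : BddAbove V := by
    refine ⟨∑ s, ∑ t, ‖a s t‖, ?_⟩
    rintro _ ⟨c, hc, rfl⟩
    refine (norm_sum_le _ _).trans (Finset.sum_le_sum fun s _ => ?_)
    refine (norm_sum_le _ _).trans (Finset.sum_le_sum fun t _ => ?_)
    rw [norm_mul]
    refine mul_le_of_le_one_right (norm_nonneg _) ?_
    have h1 : ‖c s t‖ ^ 2 ≤ 1 := le_trans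
      (Finset.single_le_sum (f := fun t => ‖c s t‖ ^ 2) (fun _ _ => sq_nonneg _)
        (Finset.mem_univ t)) (hc.1 s)
    exact (sq_le_one_iff₀ (norm_nonneg _)).1 h1
  have scale : ∀ (c : S → T → ℂ) (q : ℝ), 0 < q → (∀ s, ∑ t, ‖c s t‖ ^ 2 ≤ q ^ 2) →
      (∀ t, ∑ s, ‖c s t‖ ^ 2 ≤ q ^ 2) → ‖∑ s, ∑ t, a s t * c s t‖ ≤ q * sSup V := by
    intro c q hq h1 h2
    have hn : ∀ s t, ‖(q : ℂ)⁻¹ * c s t‖ ^ 2 = (q ^ 2)⁻¹ * ‖c s t‖ ^ 2 := by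
      intro s t
      rw [norm_mul, norm_inv, Complex.norm_real, Real.norm_of_nonneg hq.le]
      ring
    have hmem : (fun s t => (q : ℂ)⁻¹ * c s t) ∈ Good := by
      constructor
      · intro s
        simp only [hn, ← Finset.mul_sum]
        rw [inv_mul_le_iff₀ (by positivity)]
        simpa using h1 s
      · intro t
        simp only [hn, ← Finset.mul_sum]
        rw [inv_mul_le_iff₀ (by positivity)]
        simpa using h2 t
    have h := le_csSup hbdd (Set.mem_image_of_mem _ hmem)
    have e : ∑ s, ∑ t, a s t * ((q : ℂ)⁻¹ * c s t) = (q : ℂ)⁻¹ * ∑ s, ∑ t, a s t * c s t := by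
      simp only [Finset.mul_sum]
      exact Finset.sum_congr rfl fun s _ => Finset.sum_congr rfl fun t _ => by ring
    simp only [e] at h
    rw [norm_mul, norm_inv, Complex.norm_real, Real.norm_of_nonneg hq.le,
      inv_mul_le_iff₀ hq] at h
    exact h
  have hsup : sSup V ≤ C * (r / 2) + 1 / 2 * sSup V := by
    apply csSup_le hne
    rintro _ ⟨c, hc, rfl⟩
    obtain ⟨c', h1, h2, h3⟩ := fin_step p m hp hp' a C r hC hr0 hrm hyp c hc.1 hc.2
    have := scale c' (1 / 2) (by norm_num) (fun s => (h1 s).trans (by norm_num))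
      (fun t => (h2 t).trans (by norm_num))
    simp only
    linarith
  have h := scale c q hq hr hc
  nlinarith

lemma orth_single (S : Type*) [DecidableEq S] :
    Orthonormal ℂ (fun s : S => (lp.single 2 s (1 : ℂ) : lp (fun _ : S => ℂ) 2)) := by
  rw [orthonormal_iff_ite]
  intro i j
  rw [lp.inner_single_left]
  by_cases h : i = j
  · subst h; simp
  · simp [h, Pi.single_apply]

lemma exists_embed {S : Type*} [DecidableEq S] (E : Finset S) :
    ∃ J : EuclideanSpace ℂ E →L[ℂ] lp (fun _ : S => ℂ) 2, (∀ x, ‖J x‖ = ‖x‖) ∧ ‖J‖ ≤ 1 ∧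
      ‖adjoint J‖ ≤ 1 ∧
      (∀ s : E, J (EuclideanSpace.single s 1) = lp.single 2 (s : S) (1 : ℂ)) ∧
      (∀ s : E, adjoint J (lp.single 2 (s : S) (1 : ℂ)) = EuclideanSpace.single s 1) := by
  let v := (EuclideanSpace.basisFun E ℂ).toBasis
  let f : EuclideanSpace ℂ E →ₗ[ℂ] lp (fun _ : S => ℂ) 2 :=
    v.constr ℂ (fun s : E => (lp.single 2 (s : S) (1 : ℂ) : lp (fun _ : S => ℂ) 2))
  have hfv : ∀ s : E, f (EuclideanSpace.single s 1) = lp.single 2 (s : S) (1 : ℂ) := by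
    intro s
    have := v.constr_basis ℂ (fun s : E => (lp.single 2 (s : S) (1 : ℂ) : lp (fun _ : S => ℂ) 2)) s
    simpa [v, f] using this
  let J := f.isometryOfOrthonormal (v := v) (by simp [v, (EuclideanSpace.basisFun E ℂ).orthonormal]) (by
    have h1 : f ∘ v = (fun s : S => (lp.single 2 s (1 : ℂ) : lp (fun _ : S => ℂ) 2)) ∘
        (fun s : E => (s : S)) := by
      funext s
      simp [v, hfv]
    rw [h1]
    exact (orth_single S).comp _ Subtype.val_injective)
  have hJ : ∀ x, J x = f x := fun x => rfl
  have hn : ‖J.toContinuousLinearMap‖ ≤ 1 := J.norm_toContinuousLinearMap_le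
  refine ⟨J.toContinuousLinearMap, fun x => J.norm_map x, hn, ?_, ?_, ?_⟩
  · rwa [LinearIsometryEquiv.norm_map]
  · intro s
    exact hfv s
  · intro s
    apply ext_inner_right ℂ
    intro y
    rw [adjoint_inner_left, ← hfv s]
    exact J.inner_map_map _ _

lemma schur_dec {S T : Type*} [i : DecidableEq S] [j : DecidableEq T] (ψ : S × T → ℂ) (C : ℝ) :
    IsSchurMultiplier ψ C ↔
  ∀ A : lp (fun _ : S => ℂ) 2 →L[ℂ] lp (fun _ : T => ℂ) 2,
    ∃ B : lp (fun _ : S => ℂ) 2 →L[ℂ] lp (fun _ : T => ℂ) 2,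
      (∀ (s : S) (t : T),
        (inner (𝕜 := ℂ) (lp.single 2 t 1) (B (lp.single 2 s 1)))
          = ψ (s, t) * inner (𝕜 := ℂ) (lp.single 2 t 1) (A (lp.single 2 s 1))) ∧
      ‖B‖ ≤ C * ‖A‖ := by
  have hi : i = Classical.decEq S := Subsingleton.elim _ _
  have hj : j = Classical.decEq T := Subsingleton.elim _ _
  subst hi hj
  rfl

lemma schur_fin {S T : Type*} [DecidableEq S] [DecidableEq T] (ψ : S × T → ℂ) (C : ℝ)
    (h : IsSchurMultiplier ψ C) (E : Finset S) (F : Finset T)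
    (D : EuclideanSpace ℂ E →L[ℂ] EuclideanSpace ℂ F) (α : EuclideanSpace ℂ E)
    (β : EuclideanSpace ℂ F) :
    ‖∑ s : E, ∑ t : F, ψ (s, t) * (α s * (starRingEnd ℂ) (β t)) * D (EuclideanSpace.single s 1) t‖ ≤
      |C| * ‖α‖ * ‖β‖ * ‖D‖ := by
  obtain ⟨J, hJ1, hJ2, hJ3, hJ4, hJ5⟩ := exists_embed E
  obtain ⟨K, hK1, hK2, hK3, hK4, hK5⟩ := exists_embed F
  rw [schur_dec] at h
  obtain ⟨B, hB, hBn⟩ := h (K.comp (D.comp (adjoint J)))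
  have hA : ‖K.comp (D.comp (adjoint J))‖ ≤ ‖D‖ := by
    calc ‖K.comp (D.comp (adjoint J))‖ ≤ ‖K‖ * (‖D‖ * ‖adjoint J‖) :=
          (opNorm_comp_le _ _).trans (by gcongr; exact opNorm_comp_le _ _)
      _ ≤ 1 * (‖D‖ * 1) := by gcongr
      _ = ‖D‖ := by ring
  have hBn' : ‖B‖ ≤ |C| * ‖D‖ :=
    hBn.trans ((mul_le_mul_of_nonneg_right (le_abs_self C) (norm_nonneg _)).trans
      (mul_le_mul_of_nonneg_left hA (abs_nonneg _)))
  have hent : ∀ (s : E) (t : F), inner ℂ (lp.single 2 (t : T) (1 : ℂ) : lp (fun _ : T => ℂ) 2)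
      (B (lp.single 2 (s : S) 1)) =
      ψ (s, t) * D (EuclideanSpace.single s 1) t := by
    intro s t
    rw [hB]
    congr 1
    simp only [coe_comp, Function.comp_apply]
    rw [hJ5, ← adjoint_inner_left, hK5, EuclideanSpace.inner_single_left]
    simp
  have hsum : ∀ {ι : Type _} [Fintype ι] [DecidableEq ι] (x : EuclideanSpace ℂ ι),
      x = ∑ i, x i • EuclideanSpace.single i (1 : ℂ) := by
    intro ι _ _ x
    have := (EuclideanSpace.basisFun ι ℂ).sum_repr x
    simpa using this.symm
  have hJα : J α = ∑ s : E, α s • (lp.single 2 (s : S) (1 : ℂ) : lp (fun _ : S => ℂ) 2) := by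
    conv_lhs => rw [hsum α]
    simp [map_sum, hJ4]
  have hKβ : K β = ∑ t : F, β t • (lp.single 2 (t : T) (1 : ℂ) : lp (fun _ : T => ℂ) 2) := by
    have hb := (EuclideanSpace.basisFun F ℂ).sum_repr β
    conv_lhs => rw [← hb]
    simp [map_sum, hK4]
  have e : ∑ s : E, ∑ t : F, ψ (s, t) * (α s * (starRingEnd ℂ) (β t)) *
      D (EuclideanSpace.single s 1) t = inner ℂ (K β) (B (J α)) := by
    rw [hJα, hKβ, map_sum, inner_sum]
    refine Finset.sum_congr rfl fun s _ => ?_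
    rw [sum_inner]
    refine Finset.sum_congr rfl fun t _ => ?_
    rw [map_smul, inner_smul_left, inner_smul_right, hent]
    ring
  rw [e]
  calc ‖inner ℂ (K β) (B (J α))‖ ≤ ‖K β‖ * ‖B (J α)‖ := norm_inner_le_norm _ _
    _ ≤ ‖K β‖ * (‖B‖ * ‖J α‖) := by gcongr; exact B.le_opNorm _
    _ ≤ ‖K β‖ * (|C| * ‖D‖ * ‖J α‖) := by gcongr
    _ = |C| * ‖α‖ * ‖β‖ * ‖D‖ := by rw [hJ1, hK1]; ring

lemma build {S T : Type*} [DecidableEq S] [DecidableEq T] (b : S → T → ℂ) (K : ℝ) (hK : 0 ≤ K)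
    (hb : ∀ (E : Finset S) (F : Finset T) (α : S → ℂ),
      ∑ t ∈ F, ‖∑ s ∈ E, b s t * α s‖ ^ 2 ≤ K ^ 2 * ∑ s ∈ E, ‖α s‖ ^ 2) :
    ∃ B : lp (fun _ : S => ℂ) 2 →L[ℂ] lp (fun _ : T => ℂ) 2,
      (∀ (s : S) (t : T),
        (inner (𝕜 := ℂ) (lp.single 2 t 1) (B (lp.single 2 s 1))) = b s t) ∧ ‖B‖ ≤ K := by
  have hmem : ∀ s, Memℓp (fun t => b s t) (2 : ℝ≥0∞) := by
    intro s
    apply memℓp_gen' (C := K ^ 2)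
    intro F
    have := hb {s} F (fun _ => 1)
    simpa using this
  let v : S → lp (fun _ : T => ℂ) 2 := fun s => ⟨fun t => b s t, hmem s⟩
  have hv : ∀ s t, v s t = b s t := fun s t => rfl
  have hfin : ∀ (E : Finset S) (α : S → ℂ), ‖∑ s ∈ E, α s • v s‖ ^ 2 ≤ K ^ 2 * ∑ s ∈ E, ‖α s‖ ^ 2 := by
    intro E α
    have h1 : ‖∑ s ∈ E, α s • v s‖ ≤ √(K ^ 2 * ∑ s ∈ E, ‖α s‖ ^ 2) := by
      apply lp.norm_le_of_forall_sum_le (by norm_num) (Real.sqrt_nonneg _)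
      intro F
      have h2 := hb E F α
      have h3 : √(K ^ 2 * ∑ s ∈ E, ‖α s‖ ^ 2) ^ (2 : ℝ≥0∞).toReal = K ^ 2 * ∑ s ∈ E, ‖α s‖ ^ 2 := by
        simp only [ENNReal.toReal_ofNat, Real.rpow_ofNat]
        exact Real.sq_sqrt (by positivity)
      rw [h3]
      refine le_trans (le_of_eq ?_) h2
      refine Finset.sum_congr rfl fun t _ => ?_
      have h4 : (∑ s ∈ E, α s • v s : lp (fun _ : T => ℂ) 2) t = ∑ s ∈ E, b s t * α s := by
        rw [lp.coeFn_sum]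
        refine (Finset.sum_apply (M := fun _ : T => ℂ) t E (fun s => (α s • v s :
          lp (fun _ : T => ℂ) 2))).trans ?_
        refine Finset.sum_congr rfl fun s _ => ?_
        rw [lp.coeFn_smul, Pi.smul_apply, hv, smul_eq_mul, mul_comm]
      rw [h4]
      simp only [ENNReal.toReal_ofNat, Real.rpow_ofNat]
    calc _ ≤ √(K ^ 2 * ∑ s ∈ E, ‖α s‖ ^ 2) ^ 2 := by gcongr
      _ = _ := Real.sq_sqrt (by positivity)
  have hxs : ∀ x : lp (fun _ : S => ℂ) 2, Summable (fun s => ‖x s‖ ^ 2) := by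
    intro x
    have := (lp.memℓp x).summable (by norm_num)
    simpa using this
  have hxn : ∀ x : lp (fun _ : S => ℂ) 2, ∑' s, ‖x s‖ ^ 2 = ‖x‖ ^ 2 := by
    intro x
    have := lp.norm_rpow_eq_tsum (p := 2) (by norm_num) x
    simpa using this.symm
  have hsum : ∀ x : lp (fun _ : S => ℂ) 2, Summable (fun s => x s • v s) := by
    intro x
    rw [summable_iff_vanishing_norm]
    intro ε hε
    obtain ⟨s₀, hs₀⟩ := (summable_iff_vanishing_norm.1 (hxs x)) (ε ^ 2 / (K ^ 2 + 1)) (by positivity)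
    refine ⟨s₀, fun E hE => ?_⟩
    have h1 := hs₀ E hE
    rw [Real.norm_of_nonneg (by positivity), lt_div_iff₀ (by positivity)] at h1
    have h2 := hfin E (fun s => x s)
    have h3 : 0 ≤ ∑ s ∈ E, ‖x s‖ ^ 2 := by positivity
    apply lt_of_pow_lt_pow_left₀ 2 hε.le
    nlinarith
  let L : lp (fun _ : S => ℂ) 2 →ₗ[ℂ] lp (fun _ : T => ℂ) 2 :=
    { toFun := fun x => ∑' s, x s • v s
      map_add' := by
        intro x y
        rw [← (hsum x).tsum_add (hsum y)]
        simp [add_smul]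
      map_smul' := by
        intro c x
        simp only [RingHom.id_apply]
        rw [← (hsum x).tsum_const_smul c]
        simp [mul_smul] }
  have hL : ∀ x, ‖L x‖ ≤ K * ‖x‖ := by
    intro x
    refine le_of_tendsto (hsum x).hasSum.norm (Filter.Eventually.of_forall fun E => ?_)
    apply le_of_sq_le_sq _ (by positivity)
    refine (hfin E (fun s => x s)).trans ?_
    rw [mul_pow, ← hxn]
    gcongr
    exact (hxs x).sum_le_tsum E (fun _ _ => by positivity)
  refine ⟨L.mkContinuous K hL, ?_, LinearMap.mkContinuous_norm_le _ hK _⟩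
  intro s t
  have : L (lp.single 2 s 1) = v s := by
    change ∑' s', (lp.single 2 s (1 : ℂ) : lp (fun _ : S => ℂ) 2) s' • v s' = v s
    rw [tsum_eq_single s]
    · simp
    · intro s' hs'
      simp [Pi.single_apply, hs']
  rw [LinearMap.mkContinuous_apply, this, lp.inner_single_left]
  simp [hv]

lemma card_aux {S X : Type*} [DecidableEq X] (E : Finset S) (f : S → X) (I : Finset X)
    (hI : ∀ s : E, f s ∈ I) (m : ℕ)
    (h : ∀ x, {s : S | f s = x}.encard ≤ m) (x : I) :
    (Finset.univ.filter (fun s : E => (⟨f s, hI s⟩ : I) = x)).card ≤ m := by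
  have h1 : ((Finset.univ.filter (fun s : E => (⟨f s, hI s⟩ : I) = x) : Finset E) : Set E).encard
      ≤ m := by
    refine le_trans ?_ (h x)
    rw [← Subtype.val_injective.encard_image]
    apply Set.encard_le_encard
    rintro _ ⟨s, hs, rfl⟩
    simp only [Finset.coe_filter, Finset.mem_univ, true_and, Set.mem_setOf_eq] at hs
    simp [← hs]
  rw [Set.encard_coe_eq_coe_finsetCard] at h1
  exact_mod_cast h1

/-- Corollary 0.4: given `m` and `C`, there is `C'` (depending only on `C`
and `m`) such that whenever `p : S × T → X` has all fibers of sections bounded by `m` and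
`φ : X → ℂ` is such that `(s,t) ↦ ε(p(s,t))·φ(p(s,t))` is a Schur multiplier of norm at
most `C` for every `ε : X → ℂ` with `|ε| ≤ 1`, then `(s,t) ↦ ξ(s,t)·φ(p(s,t))` is a Schur
multiplier of norm at most `C'` for every `ξ : S × T → ℂ` with `|ξ| ≤ 1`. -/
theorem stmt_15 (m : ℕ) (C : ℝ) :
    ∃ C' : ℝ, ∀ (S T X : Type) (p : S × T → X),
      (∀ (t₀ : T) (x : X), {s : S | p (s, t₀) = x}.encard ≤ m) →
      (∀ (s₀ : S) (x : X), {t : T | p (s₀, t) = x}.encard ≤ m) →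
      ∀ φ : X → ℂ,
      (∀ ε : X → ℂ, (∀ x, ‖ε x‖ ≤ 1) →
        IsSchurMultiplier (fun q : S × T => ε (p q) * φ (p q)) C) →
      ∀ ξ : S × T → ℂ, (∀ q, ‖ξ q‖ ≤ 1) →
        IsSchurMultiplier (fun q : S × T => ξ q * φ (p q)) C' := by
  classical
  set r : ℝ := √(3 * m + 1) with hr
  have hr0 : 0 < r := Real.sqrt_pos.2 (by positivity)
  have hrm : 3 * (m : ℝ) ≤ r ^ 2 := by
    rw [hr, Real.sq_sqrt (by positivity)]
    linarith
  refine ⟨|C| * r, ?_⟩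
  intro S T X p hp hp' φ hφ ξ hξ
  rw [schur_dec]
  intro A
  rcases (norm_nonneg A).eq_or_lt with hA0 | hA0
  · have : A = 0 := norm_eq_zero.1 hA0.symm
    subst this
    exact ⟨0, by simp, by simp⟩
  apply build (fun s t => ξ (s, t) * φ (p (s, t)) *
    inner ℂ (lp.single 2 t (1 : ℂ) : lp (fun _ : T => ℂ) 2) (A (lp.single 2 s 1)))
    (|C| * r * ‖A‖) (by positivity)
  intro E F α
  let Am : S → T → ℂ := fun s t =>
    inner ℂ (lp.single 2 t (1 : ℂ) : lp (fun _ : T => ℂ) 2) (A (lp.single 2 s 1))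
  let β : T → ℂ := fun t => ∑ s ∈ E, ξ (s, t) * φ (p (s, t)) * Am s t * α s
  change ∑ t ∈ F, ‖β t‖ ^ 2 ≤ (|C| * r * ‖A‖) ^ 2 * ∑ s ∈ E, ‖α s‖ ^ 2
  let I : Finset X := (E ×ˢ F).image p
  have hI : ∀ (s : E) (t : F), p (s, t) ∈ I := fun s t =>
    Finset.mem_image_of_mem _ (Finset.mk_mem_product s.2 t.2)
  let αE : EuclideanSpace ℂ E := WithLp.toLp 2 (fun s : E => α s)
  let βF : EuclideanSpace ℂ F := WithLp.toLp 2 (fun t : F => β t)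
  have hα : ‖αE‖ ^ 2 = ∑ s ∈ E, ‖α s‖ ^ 2 := by
    rw [EuclideanSpace.norm_sq_eq]
    exact Finset.sum_coe_sort E (fun s => ‖α s‖ ^ 2)
  have hβ : ‖βF‖ ^ 2 = ∑ t ∈ F, ‖β t‖ ^ 2 := by
    rw [EuclideanSpace.norm_sq_eq]
    exact Finset.sum_coe_sort F (fun t => ‖β t‖ ^ 2)
  have hs1 : ∀ (U : Type) [DecidableEq U] (u : U),
      ‖(lp.single 2 u (1 : ℂ) : lp (fun _ : U => ℂ) 2)‖ = 1 := by
    intro U _ u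
    exact (orth_single U).norm_eq_one u
  have hξA : ∀ s t, ‖ξ (s, t) * Am s t‖ ^ 2 ≤ ‖Am s t‖ ^ 2 := by
    intro s t
    rw [norm_mul]
    have : ‖ξ (s, t)‖ * ‖Am s t‖ ≤ ‖Am s t‖ := mul_le_of_le_one_left (norm_nonneg _) (hξ _)
    gcongr
  have main := fin_main (fun (s : E) (t : F) => (⟨p (s, t), hI s t⟩ : I)) m
    (fun t x => card_aux E (fun s => p (s, t)) I (fun s => hI s t) m (hp t) x)
    (fun s x => card_aux F (fun t => p (s, t)) I (fun t => hI s t) m (hp' s) x)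
    (fun s t => φ (p (s, t)) * (α s * (starRingEnd ℂ) (β t))) (|C| * ‖αE‖ * ‖βF‖) r
    (by positivity) hr0 hrm
    (by
      intro w D
      have h := schur_fin _ C (hφ (fun x => if h : x ∈ I then sgn w ⟨x, h⟩ else 0) (by
        intro x
        split_ifs
        · rw [sgn_norm]
        · simp)) E F D αE βF
      refine le_trans (le_of_eq ?_) h
      congr 1
      refine Finset.sum_congr rfl fun s _ => Finset.sum_congr rfl fun t _ => ?_
      rw [dif_pos (hI s t)]
      simp only [αE, βF]
      ring)
    ‖A‖ hA0 (fun s t => ξ (s, t) * Am s t)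
    (by
      intro s
      calc ∑ t : F, ‖ξ (s, t) * Am s t‖ ^ 2 ≤ ∑ t : F, ‖Am s t‖ ^ 2 :=
            Finset.sum_le_sum fun t _ => hξA s t
        _ = ∑ t ∈ F, ‖Am s t‖ ^ 2 := Finset.sum_coe_sort F (fun t => ‖Am s t‖ ^ 2)
        _ ≤ ‖A (lp.single 2 (s : S) 1)‖ ^ 2 := (orth_single T).sum_inner_products_le _
        _ ≤ ‖A‖ ^ 2 := by
          have := A.le_opNorm (lp.single 2 (s : S) 1)
          rw [hs1, mul_one] at this
          gcongr)
    (by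
      intro t
      have hconj : ∀ s, ‖Am s t‖ = ‖inner ℂ (lp.single 2 s (1 : ℂ) : lp (fun _ : S => ℂ) 2)
          (adjoint A (lp.single 2 (t : T) 1))‖ := by
        intro s
        rw [adjoint_inner_right, norm_inner_symm]
      calc ∑ s : E, ‖ξ (s, t) * Am s t‖ ^ 2 ≤ ∑ s : E, ‖Am s t‖ ^ 2 :=
            Finset.sum_le_sum fun s _ => hξA s t
        _ = ∑ s ∈ E, ‖Am s t‖ ^ 2 := Finset.sum_coe_sort E (fun s => ‖Am s t‖ ^ 2)
        _ ≤ ‖adjoint A (lp.single 2 (t : T) 1)‖ ^ 2 := by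
          simp only [hconj]
          exact (orth_single S).sum_inner_products_le _
        _ ≤ ‖A‖ ^ 2 := by
          have := (adjoint A).le_opNorm (lp.single 2 (t : T) 1)
          rw [hs1, mul_one, LinearIsometryEquiv.norm_map] at this
          gcongr)
  have e : ∑ s : E, ∑ t : F, φ (p (s, t)) * (α s * (starRingEnd ℂ) (β t)) * (ξ (s, t) * Am s t) =
      ((‖βF‖ ^ 2 : ℝ) : ℂ) := by
    rw [hβ, Finset.sum_comm, ← Finset.sum_coe_sort F]
    push_cast
    refine Finset.sum_congr rfl fun t _ => ?_
    rw [← Complex.mul_conj']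
    have hb : β t = ∑ s : E, ξ (s, t) * φ (p (s, t)) * Am s t * α s :=
      (Finset.sum_coe_sort E (fun s => ξ (s, t) * φ (p (s, t)) * Am s t * α s)).symm
    calc ∑ s : E, φ (p (s, t)) * (α s * (starRingEnd ℂ) (β t)) * (ξ (s, t) * Am s t)
        = (∑ s : E, ξ (s, t) * φ (p (s, t)) * Am s t * α s) * (starRingEnd ℂ) (β t) := by
          rw [Finset.sum_mul]
          exact Finset.sum_congr rfl fun s _ => by ring
      _ = β t * (starRingEnd ℂ) (β t) := by rw [← hb]
  rw [e, Complex.norm_real, Real.norm_of_nonneg (by positivity)] at main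
  rw [← hα, ← hβ]
  rcases (norm_nonneg βF).eq_or_lt with h0 | h0
  · rw [← h0, zero_pow two_ne_zero]; positivity
  · have : ‖βF‖ ≤ |C| * r * ‖A‖ * ‖αE‖ := by
      apply le_of_mul_le_mul_right _ h0
      nlinarith
    calc ‖βF‖ ^ 2 ≤ (|C| * r * ‖A‖ * ‖αE‖) ^ 2 := by gcongr
      _ = _ := by ring
end
end

section
/- Let G be a group, φ : G → ℂ, and C ≥ 0. Suppose that for every complex Hilbert space H and every finitely supported a : G → B(H) one has ‖Σ_{x∈G} φ(x) λ(x) ⊗ a(x)‖ ≤ C · max{ ‖Σ_x a(x)* a(x)‖^{1/2}, ‖Σ_x a(x) a(x)*‖^{1/2} }. Then for every ε : G → ℂ with |ε(x)| ≤ 1 for all x, and every complex Hilbert space H and finitely supported a : G → B(H), ‖Σ_{x∈G} ε(x) φ(x) λ(x) ⊗ a(x)‖ ≤ C · ‖Σ_{x∈G} λ(x) ⊗ a(x)‖. -/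
open scoped ENNReal NNReal
open MeasureTheory ContinuousLinearMap

noncomputable section

lemma aux_norm_s16 {G H : Type*} [NormedAddCommGroup H] [InnerProductSpace ℂ H] [CompleteSpace H]
    (s : Finset G) (b : G → (H →L[ℂ] H)) (M : ℝ) (hM : 0 ≤ M)
    (hb : ∀ ξ : H, ∑ x ∈ s, ‖b x ξ‖ ^ 2 ≤ (M * ‖ξ‖) ^ 2) :
    Real.sqrt ‖∑ x ∈ s, (ContinuousLinearMap.adjoint (b x)).comp (b x)‖ ≤ M := by
  rw [Real.sqrt_le_left hM]
  refine ContinuousLinearMap.opNorm_le_bound _ (by positivity) fun ξ => ?_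
  set S := ∑ x ∈ s, (ContinuousLinearMap.adjoint (b x)).comp (b x) with hS
  have hin : ∀ η : H, ‖inner ℂ η (S ξ)‖ ≤ (M * ‖η‖) * (M * ‖ξ‖) := by
    intro η
    have e : inner ℂ η (S ξ) = ∑ x ∈ s, inner ℂ (b x η) (b x ξ) := by
      rw [hS, ContinuousLinearMap.sum_apply, inner_sum]
      refine Finset.sum_congr rfl fun x _ => ?_
      rw [ContinuousLinearMap.comp_apply, ContinuousLinearMap.adjoint_inner_right]
    rw [e]
    calc ‖∑ x ∈ s, inner ℂ (b x η) (b x ξ)‖ ≤ ∑ x ∈ s, ‖b x η‖ * ‖b x ξ‖ :=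
          norm_sum_le_of_le _ fun x _ => norm_inner_le_norm _ _
      _ ≤ Real.sqrt (∑ x ∈ s, ‖b x η‖ ^ 2) * Real.sqrt (∑ x ∈ s, ‖b x ξ‖ ^ 2) :=
          Real.sum_mul_le_sqrt_mul_sqrt _ _ _
      _ ≤ _ := by
          gcongr
          · exact Real.sqrt_le_iff.2 ⟨by positivity, hb η⟩
          · exact Real.sqrt_le_iff.2 ⟨by positivity, hb ξ⟩
  have h1 := hin (S ξ)
  rw [inner_self_eq_norm_sq_to_K] at h1
  have h2 : ‖S ξ‖ ^ 2 ≤ (M * ‖S ξ‖) * (M * ‖ξ‖) := by simpa using h1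
  rcases (norm_nonneg (S ξ)).eq_or_lt with h0 | h0
  · rw [← h0]; positivity
  · nlinarith

lemma aux_lp {G H : Type*} [NormedAddCommGroup H] [InnerProductSpace ℂ H]
    (f : lp (fun _ : G => H) 2) (s : Finset G) : ∑ x ∈ s, ‖f x‖ ^ 2 ≤ ‖f‖ ^ 2 := by
  have := lp.sum_rpow_le_norm_rpow (p := 2) (by norm_num) f s
  simpa using this

lemma aux_C {G : Type*} [Group G] (φ : G → ℂ) (C : ℝ)
    (h : ∀ (H : Type) [NormedAddCommGroup H] [InnerProductSpace ℂ H] [CompleteSpace H]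
      (a : G →₀ (H →L[ℂ] H))
      (T : lp (fun _ : G => H) 2 →L[ℂ] lp (fun _ : G => H) 2),
      (∀ (f : lp (fun _ : G => H) 2) (s : G),
        T f s = ∑ x ∈ a.support, φ x • ((a x) (f (x⁻¹ * s)))) →
      ‖T‖ ≤ C * max
        (Real.sqrt ‖∑ x ∈ a.support, (ContinuousLinearMap.adjoint (a x)).comp (a x)‖)
        (Real.sqrt ‖∑ x ∈ a.support, (a x).comp (ContinuousLinearMap.adjoint (a x))‖)) :
    0 ≤ C := by
  classical
  have hs : (Finsupp.single (1 : G) (ContinuousLinearMap.id ℂ ℂ)).support = {1} :=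
    Finsupp.support_single_ne_zero _ (fun h => by
      have := congrArg (fun t : ℂ →L[ℂ] ℂ => t 1) h
      simp at this)
  have := h ℂ (Finsupp.single 1 (ContinuousLinearMap.id ℂ ℂ))
    (φ 1 • ContinuousLinearMap.id ℂ _) (by
      intro f s
      rw [hs]
      simp)
  rw [hs] at this
  have h0 := (norm_nonneg _).trans this
  have e : (ContinuousLinearMap.adjoint (ContinuousLinearMap.id ℂ ℂ)) =
    ContinuousLinearMap.id ℂ ℂ := by
      refine ContinuousLinearMap.adjoint_id
  simpa [e] using h0

lemma aux_col {G : Type*} [Group G] {H : Type*} [NormedAddCommGroup H] [InnerProductSpace ℂ H]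
    (a : G →₀ (H →L[ℂ] H))
    (T : lp (fun _ : G => H) 2 →L[ℂ] lp (fun _ : G => H) 2)
    (hT : ∀ (f : lp (fun _ : G => H) 2) (s : G),
          T f s = ∑ x ∈ a.support, (a x) (f (x⁻¹ * s))) (ξ : H) :
    ∑ x ∈ a.support, ‖a x ξ‖ ^ 2 ≤ (‖T‖ * ‖ξ‖) ^ 2 := by
  classical
  have e : ∀ s ∈ a.support, T (lp.single 2 1 ξ) s = a s ξ := by
    intro s hs
    rw [hT, Finset.sum_eq_single s]
    · simp
    · intro x _ hx
      rw [lp.single_apply_ne, map_zero]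
      intro h
      exact hx (inv_mul_eq_one.1 h)
    · exact fun h => absurd hs h
  calc _ = ∑ x ∈ a.support, ‖T (lp.single 2 1 ξ) x‖ ^ 2 :=
        Finset.sum_congr rfl fun x hx => by rw [e x hx]
    _ ≤ ‖T (lp.single 2 1 ξ)‖ ^ 2 := aux_lp _ _
    _ ≤ _ := by
      gcongr
      refine (T.le_opNorm _).trans_eq ?_
      rw [lp.norm_single (by norm_num)]

lemma aux_row {G : Type*} [Group G] {H : Type*} [NormedAddCommGroup H] [InnerProductSpace ℂ H]
    [CompleteSpace H]
    (a : G →₀ (H →L[ℂ] H))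
    (T : lp (fun _ : G => H) 2 →L[ℂ] lp (fun _ : G => H) 2)
    (hT : ∀ (f : lp (fun _ : G => H) 2) (s : G),
          T f s = ∑ x ∈ a.support, (a x) (f (x⁻¹ * s))) (ξ : H) :
    ∑ x ∈ a.support, ‖ContinuousLinearMap.adjoint (a x) ξ‖ ^ 2 ≤ (‖T‖ * ‖ξ‖) ^ 2 := by
  classical
  set g := ContinuousLinearMap.adjoint T (lp.single 2 1 ξ) with hg
  have e : ∀ s ∈ a.support, ContinuousLinearMap.adjoint (a s) ξ = g s⁻¹ := by
    intro s hs
    refine ext_inner_left ℂ fun η => ?_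
    rw [← lp.inner_single_left (𝕜 := ℂ) (G := fun _ : G => H), hg, ContinuousLinearMap.adjoint_inner_right,
      ContinuousLinearMap.adjoint_inner_right, lp.inner_single_right, hT,
      Finset.sum_eq_single s]
    · simp
    · intro x _ hx
      rw [lp.single_apply_ne, map_zero]
      simpa using hx
    · exact fun h => absurd hs h
  calc _ = ∑ x ∈ a.support.map (Equiv.inv G).toEmbedding, ‖g x‖ ^ 2 := by
        rw [Finset.sum_map]
        exact Finset.sum_congr rfl fun x hx => by rw [e x hx]; rfl
    _ ≤ ‖g‖ ^ 2 := aux_lp _ _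
    _ ≤ _ := by
      gcongr
      refine (ContinuousLinearMap.le_opNorm _ _).trans_eq ?_
      rw [lp.norm_single (by norm_num), LinearIsometryEquiv.norm_map]

/-- (v) ⇒ (i) of Theorem 0.1: if for every Hilbert space `H` and finitely
supported `a : G → B(H)` one has
`‖Σ φ(x) λ(x) ⊗ a(x)‖ ≤ C · max{‖Σ a*a‖^{1/2}, ‖Σ aa*‖^{1/2}}`, then for every `ε` with
`|ε| ≤ 1` one has `‖Σ ε(x)φ(x) λ(x) ⊗ a(x)‖ ≤ C · ‖Σ λ(x) ⊗ a(x)‖`. -/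
theorem stmt_16 {G : Type*} [Group G] (φ : G → ℂ) (C : ℝ)
    (h : ∀ (H : Type) [NormedAddCommGroup H] [InnerProductSpace ℂ H] [CompleteSpace H]
      (a : G →₀ (H →L[ℂ] H))
      (T : lp (fun _ : G => H) 2 →L[ℂ] lp (fun _ : G => H) 2),
      (∀ (f : lp (fun _ : G => H) 2) (s : G),
        T f s = ∑ x ∈ a.support, φ x • ((a x) (f (x⁻¹ * s)))) →
      ‖T‖ ≤ C * max
        (Real.sqrt ‖∑ x ∈ a.support, (ContinuousLinearMap.adjoint (a x)).comp (a x)‖)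
        (Real.sqrt ‖∑ x ∈ a.support, (a x).comp (ContinuousLinearMap.adjoint (a x))‖)) :
    ∀ (H : Type) [NormedAddCommGroup H] [InnerProductSpace ℂ H] [CompleteSpace H]
      (ε : G → ℂ), (∀ x, ‖ε x‖ ≤ 1) →
      ∀ (a : G →₀ (H →L[ℂ] H))
        (T₁ T₂ : lp (fun _ : G => H) 2 →L[ℂ] lp (fun _ : G => H) 2),
        (∀ (f : lp (fun _ : G => H) 2) (s : G),
          T₁ f s = ∑ x ∈ a.support, (ε x * φ x) • ((a x) (f (x⁻¹ * s)))) →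
        (∀ (f : lp (fun _ : G => H) 2) (s : G),
          T₂ f s = ∑ x ∈ a.support, (a x) (f (x⁻¹ * s))) →
        ‖T₁‖ ≤ C * ‖T₂‖ := by
  intro H _ _ _ ε hε a T₁ T₂ h1 h2
  classical
  have hC := aux_C φ C h
  set b : G →₀ (H →L[ℂ] H) := Finsupp.onFinset a.support (fun x => ε x • a x) (by
    intro x hx
    rw [Finsupp.mem_support_iff]
    rintro h0
    exact hx (by rw [h0, smul_zero])) with hb
  have hbx : ∀ x, b x = ε x • a x := fun x => rfl
  have hsub : b.support ⊆ a.support := Finsupp.support_onFinset_subset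
  refine (h H b T₁ ?_).trans ?_
  · intro f s
    rw [h1, ← Finset.sum_subset hsub]
    · refine Finset.sum_congr rfl fun x _ => ?_
      rw [hbx, ContinuousLinearMap.smul_apply, smul_smul, mul_comm]
    · intro x _ hx
      have h0 : ε x • a x = 0 := by rw [← hbx]; exact Finsupp.notMem_support_iff.1 hx
      rw [mul_comm, mul_smul, ← ContinuousLinearMap.smul_apply, h0]
      simp
  · refine mul_le_mul_of_nonneg_left (max_le ?_ ?_) hC
    · refine aux_norm_s16 _ _ _ (norm_nonneg _) fun ξ => ?_
      refine le_trans ?_ (aux_col a T₂ h2 ξ)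
      refine (Finset.sum_le_sum_of_subset_of_nonneg hsub fun _ _ _ => by positivity).trans ?_
      refine Finset.sum_le_sum fun x _ => ?_
      gcongr
      rw [hbx, ContinuousLinearMap.smul_apply, norm_smul]
      exact mul_le_of_le_one_left (norm_nonneg _) (hε x)
    · have := aux_norm_s16 b.support (fun x => ContinuousLinearMap.adjoint (b x)) ‖T₂‖
        (norm_nonneg _) fun ξ => by
          refine le_trans ?_ (aux_row a T₂ h2 ξ)
          refine (Finset.sum_le_sum_of_subset_of_nonneg hsub fun _ _ _ => by positivity).trans ?_
          refine Finset.sum_le_sum fun x _ => ?_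
          gcongr
          rw [hbx, map_smulₛₗ, ContinuousLinearMap.smul_apply, norm_smul, RCLike.norm_conj]
          exact mul_le_of_le_one_left (norm_nonneg _) (hε x)
      simpa only [ContinuousLinearMap.adjoint_adjoint] using this
end
end
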